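/- arXiv:1801.02602 — 3 statements merged into one kernel-verified Lean document; each statement's English description precedes it below -/
import Mathlib

section
/- For a simple d-polytope P and a linear ordering ≺ of its vertices, let h_k^≺ be the number of vertices with exactly k neighbors smaller in ≺, and let F(P) be the total number of nonempty faces of P. Then Σ_{k=0}^{d} 2^k · h_k^≺ ≥ F(P), with equality if and only if ≺ is an abstract objective function (i.e., every nonempty face of P has a unique local maximum vertex with respect to ≺). -/
open Set

variable {d : ℕ}

/-- A polytope: the convex hull of a finite set of points. -/
def IsPolytope (P : Set (EuclideanSpace ℝ (Fin d))) : Prop :=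
  ∃ V : Finset (EuclideanSpace ℝ (Fin d)), P = convexHull ℝ (V : Set (EuclideanSpace ℝ (Fin d)))

/-- Two vertices are adjacent if the segment between them is an exposed face (an edge). -/
def PolyAdj (P : Set (EuclideanSpace ℝ (Fin d))) (u v : EuclideanSpace ℝ (Fin d)) : Prop :=
  u ≠ v ∧ u ∈ Set.extremePoints ℝ P ∧ v ∈ Set.extremePoints ℝ P ∧
    IsExposed ℝ P (segment ℝ u v)

/-- A simple `d`-polytope: full-dimensional and every vertex lies on exactly `d` edges. -/
def IsSimplePolytope (P : Set (EuclideanSpace ℝ (Fin d))) : Prop :=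
  IsPolytope P ∧ Module.finrank ℝ (vectorSpan ℝ P) = d ∧
    ∀ v ∈ Set.extremePoints ℝ P, {u | PolyAdj P u v}.ncard = d

/-- `v` is a local maximum of the ordering `φ` in the face `F`:
`v` is a vertex of `F` larger than all its neighbors inside `F`. -/
def PolyLocalMax (P F : Set (EuclideanSpace ℝ (Fin d))) (φ : EuclideanSpace ℝ (Fin d) → ℕ)
    (v : EuclideanSpace ℝ (Fin d)) : Prop :=
  v ∈ Set.extremePoints ℝ P ∧ v ∈ F ∧ ∀ u ∈ F, PolyAdj P u v → φ u < φ v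

/-- An abstract objective function: every nonempty (exposed) face has a
unique local maximum vertex. -/
def IsAOF (P : Set (EuclideanSpace ℝ (Fin d))) (φ : EuclideanSpace ℝ (Fin d) → ℕ) : Prop :=
  ∀ F : Set (EuclideanSpace ℝ (Fin d)), IsExposed ℝ P F → F.Nonempty →
    ∃! v, PolyLocalMax P F φ v

/-!
Count the pairs `(F, v)` in which the vertex `v` is a local maximum of the nonempty face `F`.
Each face contributes at least one pair, and exactly one for every face iff `φ` is an abstract
objective function. A polytope lies in the cone with apex `v` spanned by its edges at `v`, so a
face through `v` is determined by the edges at `v` it contains, and `v` is a local maximum of it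
iff these edges all lead to smaller neighbors. Hence a vertex with `k` smaller neighbors lies in at
most `2 ^ k` pairs. If the polytope is simple, the edge directions at `v` are linearly independent,
every set of edges at `v` is cut out by a linear functional, and the count is exactly `2 ^ k`.

The cone property is proved by projecting the other vertices from `v` onto a hyperplane that
separates them from `v`: an extreme point of the hull of the projected points spans an edge with
`v`.
-/

section FiniteSums

theorem sum_ncard_setOf_comm {α β : Type*} {s : Set α} {t : Set β} (hs : s.Finite) (ht : t.Finite)
    (r : α → β → Prop) :
    ∑ a ∈ hs.toFinset, {b ∈ t | r a b}.ncard = ∑ b ∈ ht.toFinset, {a ∈ s | r a b}.ncard := by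
  classical
  convert Finset.sum_card_bipartiteAbove_eq_sum_card_bipartiteBelow r
    (s := hs.toFinset) (t := ht.toFinset) using 2 with a _ b _
  · rw [← Set.ncard_coe_finset, Finset.coe_bipartiteAbove]
    simp only [Finite.mem_toFinset]
  · rw [← Set.ncard_coe_finset, Finset.coe_bipartiteBelow]
    simp only [Finite.mem_toFinset]

theorem sum_comp_eq_sum_range_mul_ncard {ι : Type*} {s : Set ι} (hs : s.Finite) (f : ℕ → ℕ)
    {a : ι → ℕ} {n : ℕ} (ha : ∀ i ∈ s, a i ≤ n) :
    ∑ i ∈ hs.toFinset, f (a i) =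
      ∑ k ∈ Finset.range (n + 1), f k * {i ∈ s | a i = k}.ncard := by
  have ha_mem : ∀ i ∈ hs.toFinset, a i ∈ Finset.range (n + 1) := fun i hi =>
    Finset.mem_range_succ_iff.2 (ha i (hs.mem_toFinset.1 hi))
  rw [← Finset.sum_fiberwise_of_maps_to' ha_mem]
  refine Finset.sum_congr rfl fun k _ => ?_
  rw [Finset.sum_const, smul_eq_mul, mul_comm, ← Set.ncard_coe_finset, Finset.coe_filter]
  simp only [Finite.mem_toFinset]

end FiniteSums

theorem finite_extremePoints_convexHull {𝕜 E : Type*} [Field 𝕜] [LinearOrder 𝕜]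
    [IsStrictOrderedRing 𝕜] [AddCommGroup E] [Module 𝕜 E] {V : Set E} (hV : V.Finite) :
    ((convexHull 𝕜 V).extremePoints 𝕜).Finite :=
  hV.subset extremePoints_convexHull_subset

section Cone

variable {R E : Type*} [Field R] [LinearOrder R] [IsStrictOrderedRing R] [AddCommGroup E]
  [Module R E] {s : Set E} {f : E →ₗ[R] R} {y : E}

theorem apply_nonpos_of_mem_hull (hf : ∀ z ∈ s, f z ≤ 0) (hy : y ∈ PointedCone.hull R s) :
    f y ≤ 0 := by
  induction hy using Submodule.span_induction with
  | mem z hz => exact hf z hz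
  | zero => rw [map_zero]
  | add z w _ _ hz hw => rw [map_add]; exact add_nonpos hz hw
  | smul c z _ hz =>
    rw [← Nonneg.coe_smul, map_smul]
    exact mul_nonpos_of_nonneg_of_nonpos c.2 hz

theorem mem_hull_setOf_apply_eq_zero (hf : ∀ z ∈ s, f z ≤ 0) (hy : y ∈ PointedCone.hull R s)
    (hfy : f y = 0) : y ∈ PointedCone.hull R {z ∈ s | f z = 0} := by
  induction hy using Submodule.span_induction with
  | mem z hz => exact PointedCone.subset_hull ⟨hz, hfy⟩
  | zero => exact zero_mem _
  | add z w hz hw ihz ihw =>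
    have hfz := apply_nonpos_of_mem_hull hf hz
    have hfw := apply_nonpos_of_mem_hull hf hw
    rw [map_add] at hfy
    exact add_mem (ihz (by linarith)) (ihw (by linarith))
  | smul c z _ ih =>
    rw [← Nonneg.coe_smul, map_smul, smul_eq_mul, mul_eq_zero] at hfy
    rcases hfy with hc | hfz
    · rw [← Nonneg.coe_smul, hc, zero_smul]
      exact zero_mem _
    · exact Submodule.smul_mem _ c (ih hfz)

end Cone

variable {E : Type*} [AddCommGroup E] [Module ℝ E] [TopologicalSpace E]

section Definitions

/-- The nonempty faces of `P`, including `P` itself; faces are taken to be exposed. -/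
def nonemptyFaces (P : Set E) : Set (Set E) :=
  {F | IsExposed ℝ P F ∧ F.Nonempty}

/-- The vertices of `P` joined to the vertex `v` by an edge, as in `PolyAdj` but in any real
topological vector space. It is empty when `v` is not a vertex. -/
def edgeNeighbors (P : Set E) (v : E) : Set E :=
  {u | u ≠ v ∧ u ∈ P.extremePoints ℝ ∧ v ∈ P.extremePoints ℝ ∧ IsExposed ℝ P (segment ℝ u v)}

variable {α : Type*} [LT α]

/-- The neighbors of `v` that are smaller than `v` in the ordering of the vertices by `φ`. -/
def lowerNeighbors (P : Set E) (φ : E → α) (v : E) : Set E :=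
  {u | u ∈ edgeNeighbors P v ∧ φ u < φ v}

/-- The local maxima of `φ` in the face `F` of `P`, as in `PolyLocalMax`. Adjacency in `F` is
adjacency in `P` between vertices of `F`. -/
def localMaxima (P : Set E) (φ : E → α) (F : Set E) : Set E :=
  {v | v ∈ P.extremePoints ℝ ∧ v ∈ F ∧ ∀ u ∈ F, u ∈ edgeNeighbors P v → φ u < φ v}

/-- `φ` is an abstract objective function on `P`: every nonempty face has a unique local maximum. -/
def IsAbstractObjective (P : Set E) (φ : E → α) : Prop :=
  ∀ F, IsExposed ℝ P F → F.Nonempty → ∃! v, v ∈ localMaxima P φ F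

end Definitions

section Basic

variable {V : Set E} {α : Type*} [LT α]

theorem edgeNeighbors_subset (P : Set E) (v : E) : edgeNeighbors P v ⊆ P :=
  fun _ hu => hu.2.1.1

theorem finite_edgeNeighbors (hV : V.Finite) (v : E) :
    (edgeNeighbors (convexHull ℝ V) v).Finite :=
  hV.subset fun _ hu => extremePoints_convexHull_subset hu.2.1

theorem finite_lowerNeighbors (hV : V.Finite) (φ : E → α) (v : E) :
    (lowerNeighbors (convexHull ℝ V) φ v).Finite :=
  (finite_edgeNeighbors hV v).subset (sep_subset _ _)

theorem finite_localMaxima (hV : V.Finite) (φ : E → α) (F : Set E) :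
    (localMaxima (convexHull ℝ V) φ F).Finite :=
  hV.subset fun _ hv => extremePoints_convexHull_subset hv.1

theorem mapsTo_inter_powerset_lowerNeighbors (P : Set E) (φ : E → α) (v : E) :
    MapsTo (edgeNeighbors P v ∩ ·) {F ∈ nonemptyFaces P | v ∈ localMaxima P φ F}
      (𝒫 lowerNeighbors P φ v) :=
  fun _ hF u hu => ⟨hu.1, hF.2.2.2 u hu.2 hu.1⟩

end Basic

section Faces

variable {P N F G : Set E} {v x : E}

theorem mem_of_isExposed_of_sub_mem_hull (hF : IsExposed ℝ P F) (hv : v ∈ F) (hx : x ∈ P)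
    (hxF : x - v ∈ PointedCone.hull ℝ ((· - v) '' F)) : x ∈ F := by
  obtain ⟨f, rfl⟩ := hF ⟨v, hv⟩
  have hle : -f (x - v) ≤ 0 := by
    refine apply_nonpos_of_mem_hull (f := -f.toLinearMap) ?_ hxF
    rintro _ ⟨u, hu, rfl⟩
    simpa using hu.2 v hv.1
  rw [map_sub] at hle
  exact ⟨hx, fun y hy => (hv.2 y hy).trans (by linarith)⟩

theorem sub_mem_hull_inter_of_mem_isExposed (hN : N ⊆ P)
    (hcone : ∀ x ∈ P, x - v ∈ PointedCone.hull ℝ ((· - v) '' N))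
    (hF : IsExposed ℝ P F) (hv : v ∈ F) (hx : x ∈ F) :
    x - v ∈ PointedCone.hull ℝ ((· - v) '' (N ∩ F)) := by
  obtain ⟨f, rfl⟩ := hF ⟨v, hv⟩
  have hfx : f (x - v) = 0 := by
    rw [map_sub, sub_eq_zero]
    exact le_antisymm (hv.2 x hx.1) (hx.2 v hv.1)
  have hfN : ∀ y ∈ (· - v) '' N, f y ≤ 0 := by
    rintro _ ⟨u, hu, rfl⟩
    simpa using hv.2 u (hN hu)
  refine Submodule.span_mono ?_
    (mem_hull_setOf_apply_eq_zero (f := f.toLinearMap) hfN (hcone x hx.1) hfx)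
  rintro _ ⟨⟨u, hu, rfl⟩, hfu⟩
  have hfu : f u = f v := by simpa [sub_eq_zero] using hfu
  exact ⟨u, ⟨hu, hN hu, fun y hy => (hv.2 y hy).trans hfu.ge⟩, rfl⟩

theorem subset_of_isExposed_of_inter_subset (hN : N ⊆ P)
    (hcone : ∀ x ∈ P, x - v ∈ PointedCone.hull ℝ ((· - v) '' N))
    (hF : IsExposed ℝ P F) (hG : IsExposed ℝ P G) (hvF : v ∈ F) (hvG : v ∈ G)
    (hFG : N ∩ F ⊆ G) : F ⊆ G := fun _ hx =>
  mem_of_isExposed_of_sub_mem_hull hG hvG (hF.subset hx) <|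
    Submodule.span_mono (image_mono hFG) (sub_mem_hull_inter_of_mem_isExposed hN hcone hF hvF hx)

theorem injOn_inter_isExposed (hN : N ⊆ P)
    (hcone : ∀ x ∈ P, x - v ∈ PointedCone.hull ℝ ((· - v) '' N)) :
    InjOn (N ∩ ·) {F | IsExposed ℝ P F ∧ v ∈ F} := by
  rintro F ⟨hF, hvF⟩ G ⟨hG, hvG⟩ (hFG : N ∩ F = N ∩ G)
  exact Subset.antisymm
    (subset_of_isExposed_of_inter_subset hN hcone hF hG hvF hvG (hFG ▸ inter_subset_right))
    (subset_of_isExposed_of_inter_subset hN hcone hG hF hvG hvF (hFG ▸ inter_subset_right))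

theorem exists_strongDual_apply_eq [SeparatingDual ℝ E] {ι : Type*} [Finite ι] {b : ι → E}
    (hb : LinearIndependent ℝ b) (c : ι → ℝ) : ∃ f : StrongDual ℝ E, ∀ i, f (b i) = c i := by
  obtain ⟨f, hf⟩ := SeparatingDual.dualMap_surjective_iff.2 hb (Finsupp.linearCombination ℝ c)
  refine ⟨f, fun i => ?_⟩
  simpa using LinearMap.congr_fun hf (Finsupp.single i 1)

theorem exists_isExposed_inter_eq [SeparatingDual ℝ E] (hv : v ∈ P) (hN : N ⊆ P)
    (hNfin : N.Finite) (hcone : ∀ x ∈ P, x - v ∈ PointedCone.hull ℝ ((· - v) '' N))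
    (hli : LinearIndepOn ℝ (· - v) N) {S : Set E} (hS : S ⊆ N) :
    ∃ F, IsExposed ℝ P F ∧ v ∈ F ∧ N ∩ F = S := by
  classical
  have := hNfin.to_subtype
  obtain ⟨f, hf⟩ := exists_strongDual_apply_eq hli fun u => if (u : E) ∈ S then 0 else -1
  replace hf : ∀ u ∈ N, f u - f v = if u ∈ S then 0 else -1 := fun u hu => by
    simpa using hf ⟨u, hu⟩
  have hfN : ∀ y ∈ (· - v) '' N, f y ≤ 0 := by
    rintro _ ⟨u, hu, rfl⟩
    rw [map_sub, hf u hu]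
    split_ifs <;> norm_num
  have hfP : ∀ x ∈ P, f x ≤ f v := fun x hx => by
    simpa using apply_nonpos_of_mem_hull (f := f.toLinearMap) hfN (hcone x hx)
  refine ⟨f.toExposed P, ContinuousLinearMap.toExposed.isExposed, ⟨hv, hfP⟩, ?_⟩
  ext u
  constructor
  · rintro ⟨huN, huF⟩
    by_contra huS
    have hfu := hf u huN
    rw [if_neg huS] at hfu
    linarith [huF.2 v hv]
  · intro huS
    have hfu := hf u (hS huS)
    rw [if_pos huS] at hfu
    exact ⟨hS huS, hN (hS huS), fun y hy => (hfP y hy).trans (by linarith)⟩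

end Faces

section VertexFigure

/-- The central projection from `v` onto the hyperplane `l = l v - 1`, translated by `-v`. It maps
the vertices other than `v` of a polytope on which `l` is maximal only at `v` to points whose convex
hull is a vertex figure at `v`. If `l w = l v` it takes the junk value `0`. -/
noncomputable def vertexProjection (l : StrongDual ℝ E) (v w : E) : E :=
  (l v - l w)⁻¹ • (w - v)

variable {P : Set E} {l : StrongDual ℝ E} {v w : E}

theorem smul_vertexProjection (hw : l w < l v) :
    (l v - l w) • vertexProjection l v w = w - v :=
  smul_inv_smul₀ (sub_pos.2 hw).ne' _

theorem injOn_vertexProjection (hv : v ∈ P) :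
    InjOn (vertexProjection l v) {w ∈ P.extremePoints ℝ | l w < l v} := by
  rintro w ⟨hw, hlw⟩ z ⟨hz, hlz⟩ hwz
  have hray : SameRay ℝ (w - v) (z - v) := by
    rw [← smul_vertexProjection hlw, ← smul_vertexProjection hlz, hwz]
    exact ((SameRay.refl _).nonneg_smul_left (sub_pos.2 hlw).le).nonneg_smul_right
      (sub_pos.2 hlz).le
  have hne : ∀ {y}, l y < l v → v ≠ y := fun hy h => hy.ne (h ▸ rfl)
  rcases wbtw_total_of_sameRay_vsub_left (P := E) hray with h | h
  · exact (((mem_extremePoints_iff_forall_segment.1 hw).2 v hv z hz.1 h.mem_segment).resolve_left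
      (hne hlw)).symm
  · exact ((mem_extremePoints_iff_forall_segment.1 hz).2 v hv w hw.1 h.mem_segment).resolve_left
      (hne hlz)

end VertexFigure

variable [T2Space E] [IsTopologicalAddGroup E] [ContinuousSMul ℝ E] [LocallyConvexSpace ℝ E]

section Polytope

variable {V F : Set E} {v w : E}

theorem convexHull_extremePoints_of_finite {s : Set E} (hs : IsCompact s) (hsconv : Convex ℝ s)
    (hfin : (s.extremePoints ℝ).Finite) : convexHull ℝ (s.extremePoints ℝ) = s := by
  rw [← (hfin.isClosed_convexHull ℝ).closure_eq, closure_convexHull_extremePoints hs hsconv]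

theorem convexHull_extremePoints_convexHull (hV : V.Finite) :
    convexHull ℝ ((convexHull ℝ V).extremePoints ℝ) = convexHull ℝ V :=
  convexHull_extremePoints_of_finite (hV.isCompact_convexHull (𝕜 := ℝ)) (convex_convexHull ℝ V)
    (finite_extremePoints_convexHull hV)

theorem convexHull_inter_of_isExposed (hV : V.Finite) (hF : IsExposed ℝ (convexHull ℝ V) F) :
    convexHull ℝ (V ∩ F) = F := by
  have hFconv : Convex ℝ F := hF.convex (convex_convexHull ℝ V)
  have hFcomp : IsCompact F := hF.isCompact (hV.isCompact_convexHull (𝕜 := ℝ))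
  have hext : F.extremePoints ℝ ⊆ V ∩ F := fun x hx =>
    ⟨extremePoints_convexHull_subset (hF.isExtreme.extremePoints_subset_extremePoints hx), hx.1⟩
  have hfin : (F.extremePoints ℝ).Finite := hV.subset (hext.trans inter_subset_left)
  refine Subset.antisymm (convexHull_min inter_subset_right hFconv) ?_
  calc F = convexHull ℝ (F.extremePoints ℝ) :=
        (convexHull_extremePoints_of_finite hFcomp hFconv hfin).symm
    _ ⊆ convexHull ℝ (V ∩ F) := convexHull_mono hext

theorem finite_setOf_isExposed_convexHull (hV : V.Finite) :
    {F | IsExposed ℝ (convexHull ℝ V) F}.Finite := by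
  refine Finite.of_injOn (f := (V ∩ ·)) (t := 𝒫 V) (fun F _ => inter_subset_left) ?_
    hV.finite_subsets
  intro F hF G hG (hFG : V ∩ F = V ∩ G)
  rw [← convexHull_inter_of_isExposed hV hF, hFG, convexHull_inter_of_isExposed hV hG]

theorem finite_nonemptyFaces (hV : V.Finite) : (nonemptyFaces (convexHull ℝ V)).Finite :=
  (finite_setOf_isExposed_convexHull hV).subset (sep_subset _ _)

theorem exists_strongDual_lt_of_mem_extremePoints (hV : V.Finite)
    (hv : v ∈ (convexHull ℝ V).extremePoints ℝ) :
    ∃ l : StrongDual ℝ E, ∀ w ∈ V, w ≠ v → l w < l v := by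
  have hv_notMem : v ∉ convexHull ℝ (V \ {v}) := fun h => by
    have hsub : V \ {v} ⊆ convexHull ℝ V \ {v} := sdiff_subset_sdiff_left (subset_convexHull ℝ V)
    have hconv := ((convex_convexHull ℝ V).mem_extremePoints_iff_convex_sdiff.1 hv).2
    exact (convexHull_min hsub hconv h).2 rfl
  obtain ⟨l, c, hl, hc⟩ := geometric_hahn_banach_closed_point (convex_convexHull ℝ (V \ {v}))
    ((hV.subset sdiff_subset).isClosed_convexHull ℝ) hv_notMem
  exact ⟨l, fun w hw hwv => (hl w (subset_convexHull ℝ _ ⟨hw, hwv⟩)).trans hc⟩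

theorem isExposed_segment_of_forall_lt (hV : V.Finite) (hv : v ∈ V) (hw : w ∈ V)
    {g : StrongDual ℝ E} (hwv : g w = g v) (hg : ∀ x ∈ V, x ≠ v → x ≠ w → g x < g v) :
    IsExposed ℝ (convexHull ℝ V) (segment ℝ w v) := by
  have hle : ∀ x ∈ convexHull ℝ V, g x ≤ g v := by
    refine fun x hx => convexHull_min ?_ (convex_halfSpace_le g.isLinear (g v)) hx
    intro x hx
    by_cases hxv : x = v
    · exact (congrArg g hxv).le
    by_cases hxw : x = w
    · exact ((congrArg g hxw).trans hwv).le
    exact (hg x hx hxv hxw).le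
  have hexp : IsExposed ℝ (convexHull ℝ V) (g.toExposed (convexHull ℝ V)) :=
    ContinuousLinearMap.toExposed.isExposed
  have hverts : V ∩ g.toExposed (convexHull ℝ V) = {w, v} := by
    ext x
    constructor
    · rintro ⟨hxV, -, hx⟩
      by_contra hne
      obtain ⟨hxw, hxv⟩ := not_or.1 hne
      exact (hg x hxV hxv hxw).not_ge (hx v (subset_convexHull ℝ V hv))
    · rintro (rfl | rfl)
      · exact ⟨hw, subset_convexHull ℝ V hw, fun y hy => (hle y hy).trans hwv.ge⟩
      · exact ⟨hv, subset_convexHull ℝ V hv, hle⟩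
  rwa [← convexHull_inter_of_isExposed hV hexp, hverts, convexHull_pair] at hexp

theorem mem_edgeNeighbors_of_vertexProjection_mem_extremePoints (hV : V.Finite)
    (hv : v ∈ (convexHull ℝ V).extremePoints ℝ) {l : StrongDual ℝ E}
    (hl : ∀ x ∈ (convexHull ℝ V).extremePoints ℝ, x ≠ v → l x < l v)
    (hw : w ∈ (convexHull ℝ V).extremePoints ℝ) (hwv : w ≠ v)
    (hext : vertexProjection l v w ∈ (convexHull ℝ
      (vertexProjection l v '' ((convexHull ℝ V).extremePoints ℝ \ {v}))).extremePoints ℝ) :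
    w ∈ edgeNeighbors (convexHull ℝ V) v := by
  have hfin := finite_extremePoints_convexHull (𝕜 := ℝ) hV
  obtain ⟨m, hm⟩ :=
    exists_strongDual_lt_of_mem_extremePoints ((hfin.subset sdiff_subset).image _) hext
  -- Adding this multiple of `l` tilts `m` so that it takes the same value at `v` and `w`.
  set g : StrongDual ℝ E := m + m (vertexProjection l v w) • l
  have hg : ∀ x ∈ (convexHull ℝ V).extremePoints ℝ, x ≠ v → g x - g v =
      (l v - l x) * (m (vertexProjection l v x) - m (vertexProjection l v w)) := by
    intro x hx hxv
    have hmx := congrArg m (smul_vertexProjection (hl x hx hxv))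
    rw [map_smul, map_sub, smul_eq_mul] at hmx
    simp only [g, add_apply, smul_apply, smul_eq_mul]
    linear_combination -hmx
  have hg_eq : g w = g v := by rw [← sub_eq_zero, hg w hw hwv, sub_self, mul_zero]
  have hg_lt : ∀ x ∈ (convexHull ℝ V).extremePoints ℝ, x ≠ v → x ≠ w → g x < g v := by
    intro x hx hxv hxw
    have hne : vertexProjection l v x ≠ vertexProjection l v w := fun h =>
      hxw (injOn_vertexProjection hv.1 ⟨hx, hl x hx hxv⟩ ⟨hw, hl w hw hwv⟩ h)
    rw [← sub_neg, hg x hx hxv]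
    exact mul_neg_of_pos_of_neg (sub_pos.2 (hl x hx hxv))
      (sub_neg.2 (hm _ ⟨x, ⟨hx, hxv⟩, rfl⟩ hne))
  have hedge := isExposed_segment_of_forall_lt hfin hv hw hg_eq hg_lt
  rw [convexHull_extremePoints_convexHull hV] at hedge
  exact ⟨hwv, hw, hv, hedge⟩

theorem sub_mem_hull_edgeNeighbors (hV : V.Finite) (hv : v ∈ (convexHull ℝ V).extremePoints ℝ) :
    ∀ x ∈ convexHull ℝ V,
      x - v ∈ PointedCone.hull ℝ ((· - v) '' edgeNeighbors (convexHull ℝ V) v) := by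
  set W := (convexHull ℝ V).extremePoints ℝ
  set K := PointedCone.hull ℝ ((· - v) '' edgeNeighbors (convexHull ℝ V) v)
  have hWfin : W.Finite := finite_extremePoints_convexHull hV
  have hWV : convexHull ℝ W = convexHull ℝ V := convexHull_extremePoints_convexHull hV
  obtain ⟨l, hl⟩ := exists_strongDual_lt_of_mem_extremePoints hWfin (v := v) (by rwa [hWV])
  set Q := vertexProjection l v '' (W \ {v})
  have hQfin : Q.Finite := (hWfin.subset sdiff_subset).image _
  have hQextK : (convexHull ℝ Q).extremePoints ℝ ⊆ K := by
    intro q hq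
    obtain ⟨w, ⟨hw, hwv⟩, rfl⟩ := extremePoints_convexHull_subset hq
    have hwN := mem_edgeNeighbors_of_vertexProjection_mem_extremePoints hV hv hl hw hwv hq
    exact K.smul_mem (inv_nonneg.2 (sub_pos.2 (hl w hw hwv)).le)
      (PointedCone.subset_hull ⟨w, hwN, rfl⟩)
  have hQK : Q ⊆ K := calc
    Q ⊆ convexHull ℝ Q := subset_convexHull ℝ Q
    _ = convexHull ℝ ((convexHull ℝ Q).extremePoints ℝ) :=
      (convexHull_extremePoints_convexHull hQfin).symm
    _ ⊆ K := convexHull_min hQextK K.convex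
  have hWK : W ⊆ (· - v) ⁻¹' (K : Set E) := by
    intro w hw
    by_cases hwv : w = v
    · simp [hwv]
    · rw [mem_preimage, ← smul_vertexProjection (hl w hw hwv)]
      exact K.smul_mem (sub_pos.2 (hl w hw hwv)).le (hQK ⟨w, ⟨hw, hwv⟩, rfl⟩)
  have hKconv : Convex ℝ ((· - v) ⁻¹' (K : Set E)) := by
    simpa only [sub_eq_add_neg] using K.convex.translate_preimage_left (-v)
  exact fun x hx => convexHull_min hWK hKconv (hWV ▸ hx)

theorem span_sub_edgeNeighbors (hV : V.Finite) (hv : v ∈ (convexHull ℝ V).extremePoints ℝ) :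
    Submodule.span ℝ ((· - v) '' edgeNeighbors (convexHull ℝ V) v) =
      vectorSpan ℝ (convexHull ℝ V) := by
  rw [vectorSpan_eq_span_vsub_set_right ℝ hv.1]
  refine le_antisymm (Submodule.span_mono (image_mono (edgeNeighbors_subset _ v)))
    (Submodule.span_le.2 ?_)
  rintro _ ⟨x, hx, rfl⟩
  exact PointedCone.hull_le_span ℝ _ (sub_mem_hull_edgeNeighbors hV hv x hx)

theorem linearIndepOn_edgeNeighbors_of_ncard_eq_finrank (hV : V.Finite)
    (hv : v ∈ (convexHull ℝ V).extremePoints ℝ)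
    (hdeg : (edgeNeighbors (convexHull ℝ V) v).ncard =
      Module.finrank ℝ (vectorSpan ℝ (convexHull ℝ V))) :
    LinearIndepOn ℝ (· - v) (edgeNeighbors (convexHull ℝ V) v) := by
  have := (finite_edgeNeighbors hV v).fintype
  rw [LinearIndepOn, linearIndependent_iff_card_eq_finrank_span, Set.finrank,
    show range (fun u : edgeNeighbors (convexHull ℝ V) v => (u : E) - v) = _ from
      (image_eq_range (· - v) _).symm, span_sub_edgeNeighbors hV hv, ← hdeg, ← Nat.card_coe_set_eq,
    Nat.card_eq_fintype_card]

end Polytope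

section LocalMaxima

variable {V F : Set E} {v : E} {α : Type*}

theorem localMaxima_nonempty [LinearOrder α] {φ : E → α} (hV : V.Finite)
    (hφ : InjOn φ ((convexHull ℝ V).extremePoints ℝ)) (hF : IsExposed ℝ (convexHull ℝ V) F)
    (hne : F.Nonempty) : (localMaxima (convexHull ℝ V) φ F).Nonempty := by
  obtain ⟨x, hx⟩ :=
    (hF.isCompact (hV.isCompact_convexHull (𝕜 := ℝ))).extremePoints_nonempty hne
  have hfin : ((convexHull ℝ V).extremePoints ℝ ∩ F).Finite :=
    (finite_extremePoints_convexHull hV).subset inter_subset_left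
  obtain ⟨v, ⟨hv, hvF⟩, hmax⟩ := exists_max_image _ φ hfin
    ⟨x, hF.isExtreme.extremePoints_subset_extremePoints hx, hx.1⟩
  refine ⟨v, hv, hvF, fun u huF hu => ?_⟩
  exact (hmax u ⟨hu.2.1, huF⟩).lt_of_ne fun h => hu.1 (hφ hu.2.1 hv h)

variable [LT α]

theorem injOn_inter_setOf_mem_localMaxima (hV : V.Finite)
    (hv : v ∈ (convexHull ℝ V).extremePoints ℝ) (φ : E → α) :
    InjOn (edgeNeighbors (convexHull ℝ V) v ∩ ·)
      {F ∈ nonemptyFaces (convexHull ℝ V) | v ∈ localMaxima (convexHull ℝ V) φ F} := by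
  refine (injOn_inter_isExposed (edgeNeighbors_subset _ v)
    (sub_mem_hull_edgeNeighbors hV hv)).mono ?_
  exact fun F hF => ⟨hF.1.1, hF.2.2.1⟩

theorem ncard_setOf_mem_localMaxima_le (hV : V.Finite)
    (hv : v ∈ (convexHull ℝ V).extremePoints ℝ) (φ : E → α) :
    {F ∈ nonemptyFaces (convexHull ℝ V) | v ∈ localMaxima (convexHull ℝ V) φ F}.ncard ≤
      2 ^ (lowerNeighbors (convexHull ℝ V) φ v).ncard := by
  have hfin := finite_lowerNeighbors hV φ v
  rw [← ncard_powerset _ hfin]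
  exact ncard_le_ncard_of_injOn _ (mapsTo_inter_powerset_lowerNeighbors _ φ v)
    (injOn_inter_setOf_mem_localMaxima hV hv φ) hfin.finite_subsets

theorem ncard_setOf_mem_localMaxima_eq (hV : V.Finite)
    (hv : v ∈ (convexHull ℝ V).extremePoints ℝ)
    (hli : LinearIndepOn ℝ (· - v) (edgeNeighbors (convexHull ℝ V) v)) (φ : E → α) :
    {F ∈ nonemptyFaces (convexHull ℝ V) | v ∈ localMaxima (convexHull ℝ V) φ F}.ncard =
      2 ^ (lowerNeighbors (convexHull ℝ V) φ v).ncard := by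
  rw [← ncard_powerset _ (finite_lowerNeighbors hV φ v)]
  refine BijOn.ncard_eq ⟨mapsTo_inter_powerset_lowerNeighbors _ φ v,
    injOn_inter_setOf_mem_localMaxima hV hv φ, fun S hS => ?_⟩
  obtain ⟨F, hF, hvF, hFS⟩ := exists_isExposed_inter_eq hv.1 (edgeNeighbors_subset _ v)
    (finite_edgeNeighbors hV v) (sub_mem_hull_edgeNeighbors hV hv) hli
    (hS.trans (sep_subset _ _) : S ⊆ edgeNeighbors (convexHull ℝ V) v)
  exact ⟨F, ⟨⟨hF, v, hvF⟩, hv, hvF, fun u huF hu => (hS (hFS.subset ⟨hu, huF⟩)).2⟩, hFS⟩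

theorem sum_ncard_localMaxima (hV : V.Finite) (φ : E → α) :
    ∑ F ∈ (finite_nonemptyFaces hV).toFinset, (localMaxima (convexHull ℝ V) φ F).ncard =
      ∑ v ∈ (finite_extremePoints_convexHull (𝕜 := ℝ) hV).toFinset,
        {F ∈ nonemptyFaces (convexHull ℝ V) | v ∈ localMaxima (convexHull ℝ V) φ F}.ncard := by
  rw [← sum_ncard_setOf_comm (finite_nonemptyFaces hV)]
  refine Finset.sum_congr rfl fun F _ => ?_
  exact congrArg ncard (Subset.antisymm (fun v hv => ⟨hv.1, hv⟩) fun v hv => hv.2)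

end LocalMaxima

section Counting

variable {V : Set E} {α : Type*} [LinearOrder α] {φ : E → α}

theorem one_le_ncard_localMaxima (hV : V.Finite)
    (hφ : InjOn φ ((convexHull ℝ V).extremePoints ℝ)) :
    ∀ F ∈ (finite_nonemptyFaces hV).toFinset, 1 ≤ (localMaxima (convexHull ℝ V) φ F).ncard := by
  intro F hF
  obtain ⟨hFexp, hne⟩ := (finite_nonemptyFaces hV).mem_toFinset.1 hF
  exact (ncard_pos (finite_localMaxima hV φ F)).2 (localMaxima_nonempty hV hφ hFexp hne)

theorem ncard_nonemptyFaces_le_sum_two_pow (hV : V.Finite)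
    (hφ : InjOn φ ((convexHull ℝ V).extremePoints ℝ)) :
    (nonemptyFaces (convexHull ℝ V)).ncard ≤
      ∑ v ∈ (finite_extremePoints_convexHull (𝕜 := ℝ) hV).toFinset,
        2 ^ (lowerNeighbors (convexHull ℝ V) φ v).ncard := by
  rw [ncard_eq_toFinset_card _ (finite_nonemptyFaces hV), Finset.card_eq_sum_ones]
  calc
    _ ≤ ∑ F ∈ (finite_nonemptyFaces hV).toFinset, (localMaxima (convexHull ℝ V) φ F).ncard :=
      Finset.sum_le_sum (one_le_ncard_localMaxima hV hφ)
    _ = _ := sum_ncard_localMaxima hV φ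
    _ ≤ _ := Finset.sum_le_sum fun v hv =>
      ncard_setOf_mem_localMaxima_le hV ((Finite.mem_toFinset _).1 hv) φ

theorem ncard_nonemptyFaces_eq_sum_two_pow_iff (hV : V.Finite)
    (hφ : InjOn φ ((convexHull ℝ V).extremePoints ℝ))
    (hli : ∀ v ∈ (convexHull ℝ V).extremePoints ℝ,
      LinearIndepOn ℝ (· - v) (edgeNeighbors (convexHull ℝ V) v)) :
    (nonemptyFaces (convexHull ℝ V)).ncard =
      ∑ v ∈ (finite_extremePoints_convexHull (𝕜 := ℝ) hV).toFinset,
        2 ^ (lowerNeighbors (convexHull ℝ V) φ v).ncard ↔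
      IsAbstractObjective (convexHull ℝ V) φ := by
  have hsum : ∑ v ∈ (finite_extremePoints_convexHull (𝕜 := ℝ) hV).toFinset,
        2 ^ (lowerNeighbors (convexHull ℝ V) φ v).ncard =
      ∑ F ∈ (finite_nonemptyFaces hV).toFinset, (localMaxima (convexHull ℝ V) φ F).ncard := by
    rw [sum_ncard_localMaxima hV φ]
    refine Finset.sum_congr rfl fun v hv => ?_
    rw [Finite.mem_toFinset] at hv
    exact (ncard_setOf_mem_localMaxima_eq hV hv (hli v hv) φ).symm
  rw [hsum, ncard_eq_toFinset_card _ (finite_nonemptyFaces hV), Finset.card_eq_sum_ones,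
    Finset.sum_eq_sum_iff_of_le (one_le_ncard_localMaxima hV hφ)]
  simp only [Finite.mem_toFinset, nonemptyFaces, mem_ofPred_eq, and_imp, IsAbstractObjective,
    eq_comm (a := 1), ncard_eq_one, eq_singleton_iff_unique_mem, ExistsUnique]

end Counting

theorem stmt_4_general {V : Set E} (hV : V.Finite) {n : ℕ}
    (hdim : Module.finrank ℝ (vectorSpan ℝ (convexHull ℝ V)) = n)
    (hdeg : ∀ v ∈ (convexHull ℝ V).extremePoints ℝ, (edgeNeighbors (convexHull ℝ V) v).ncard = n)
    {α : Type*} [LinearOrder α] {φ : E → α} (hφ : InjOn φ ((convexHull ℝ V).extremePoints ℝ)) :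
    ((nonemptyFaces (convexHull ℝ V)).ncard ≤
        ∑ k ∈ Finset.range (n + 1), 2 ^ k * {v ∈ (convexHull ℝ V).extremePoints ℝ |
          (lowerNeighbors (convexHull ℝ V) φ v).ncard = k}.ncard) ∧
      ((nonemptyFaces (convexHull ℝ V)).ncard =
        ∑ k ∈ Finset.range (n + 1), 2 ^ k * {v ∈ (convexHull ℝ V).extremePoints ℝ |
          (lowerNeighbors (convexHull ℝ V) φ v).ncard = k}.ncard ↔
        IsAbstractObjective (convexHull ℝ V) φ) := by
  have hle : ∀ v ∈ (convexHull ℝ V).extremePoints ℝ,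
      (lowerNeighbors (convexHull ℝ V) φ v).ncard ≤ n := fun v hv =>
    hdeg v hv ▸ ncard_le_ncard (sep_subset _ _) (finite_edgeNeighbors hV v)
  rw [← sum_comp_eq_sum_range_mul_ncard (finite_extremePoints_convexHull hV) (2 ^ ·) hle]
  refine ⟨ncard_nonemptyFaces_le_sum_two_pow hV hφ,
    ncard_nonemptyFaces_eq_sum_two_pow_iff hV hφ fun v hv => ?_⟩
  exact linearIndepOn_edgeNeighbors_of_ncard_eq_finrank hV hv ((hdeg v hv).trans hdim.symm)

/-- Kalai's counting identity: `Σ 2^k h_k^≺ ≥ F(P)` with equality iff `≺` is an AOF. -/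
theorem stmt_4 (P : Set (EuclideanSpace ℝ (Fin d))) (hP : IsSimplePolytope P)
    (φ : EuclideanSpace ℝ (Fin d) → ℕ) (hφ : Set.InjOn φ (Set.extremePoints ℝ P)) :
    ({F : Set (EuclideanSpace ℝ (Fin d)) | IsExposed ℝ P F ∧ F.Nonempty}.ncard ≤
        ∑ k ∈ Finset.range (d + 1),
          2 ^ k * {v ∈ Set.extremePoints ℝ P |
            {u | PolyAdj P u v ∧ φ u < φ v}.ncard = k}.ncard) ∧
    (({F : Set (EuclideanSpace ℝ (Fin d)) | IsExposed ℝ P F ∧ F.Nonempty}.ncard =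
        ∑ k ∈ Finset.range (d + 1),
          2 ^ k * {v ∈ Set.extremePoints ℝ P |
            {u | PolyAdj P u v ∧ φ u < φ v}.ncard = k}.ncard) ↔ IsAOF P φ) := by
  obtain ⟨⟨V, rfl⟩, hdim, hdeg⟩ := hP
  exact stmt_4_general V.finite_toSet hdim hdeg hφ
end

section
/- For the majority function on n voters with independent uniform ±1 votes, and noise consisting of independently flipping each vote with probability t ∈ (0,1/2), the probability N_t(maj_n) that the noisy majority outcome differs from the true outcome converges, as n → ∞, to arccos(1-2t)/π. -/
open Finset Real

/-- The sign of the majority vote: `1` if more `true` votes than `false`, else `-1`. -/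
noncomputable def majSign {n : ℕ} (x : Fin n → Bool) : ℝ :=
  if 0 < ∑ i, (if x i then (1 : ℝ) else -1) then 1 else -1

/-- The probability that the noisy majority outcome differs from the true one:
each vote is uniform and each is flipped independently with probability `t`. -/
noncomputable def majNoiseSens (n : ℕ) (t : ℝ) : ℝ :=
  ∑ x : Fin n → Bool, ∑ e : Fin n → Bool,
    (1 / 2 ^ n : ℝ) * (∏ i, if e i then t else 1 - t) *
      (if majSign x = majSign (fun i => xor (x i) (e i)) then 0 else 1)

/-!
Let `X k` be the `k`-th vote and `Y k` its noisy version; both are centred with variance one, and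
their covariance is `ρ = 1 - 2 t`. By the central limit theorem in the plane, obtained from the
one on the line by the Cramér–Wold device, the normalised sums of the pairs `(X k, Y k)` converge
in law to `(U, cos φ * U + sin φ * V)`, where `φ = arccos ρ` and `U`, `V` are independent standard
Gaussians. The two outcomes differ when exactly one of the sums is positive. In the limit each of
the two ways for this to happen says that `(U, V)` lies in a wedge of opening `φ`, which by rotation
invariance has probability `φ / (2 π)`.
-/

open MeasureTheory ProbabilityTheory Filter
open scoped Topology RealInnerProductSpace ENNReal

section CramerWold

lemma charFun_map_inner {E : Type*} [NormedAddCommGroup E] [InnerProductSpace ℝ E]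
    [MeasurableSpace E] [BorelSpace E] [SecondCountableTopology E]
    {Ω : Type*} {mΩ : MeasurableSpace Ω} {P : Measure Ω} {X : Ω → E} (hX : AEMeasurable X P)
    (t : E) : charFun (P.map fun ω ↦ ⟪X ω, t⟫) 1 = charFun (P.map X) t := by
  rw [charFun_apply, charFun_apply, integral_map (by fun_prop) (by fun_prop),
    integral_map hX (by fun_prop)]
  simp

variable {Ω' : Type*} {Ω : ℕ → Type*} {mΩ : ∀ n, MeasurableSpace (Ω n)} {mΩ' : MeasurableSpace Ω'}
  {P : ∀ n, Measure (Ω n)} [∀ n, IsProbabilityMeasure (P n)]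
  {P' : Measure Ω'} [IsProbabilityMeasure P']

theorem tendstoInDistribution_of_forall_inner {E : Type*} [NormedAddCommGroup E]
    [InnerProductSpace ℝ E] [FiniteDimensional ℝ E] [MeasurableSpace E] [BorelSpace E]
    {X : ∀ n, Ω n → E} {Z : Ω' → E} (hX : ∀ n, AEMeasurable (X n) (P n)) (hZ : AEMeasurable Z P')
    (h : ∀ t, TendstoInDistribution (fun n ω ↦ ⟪X n ω, t⟫) atTop (fun ω ↦ ⟪Z ω, t⟫) P P') :
    TendstoInDistribution X atTop Z P P' where
  forall_aemeasurable := hX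
  aemeasurable_limit := hZ
  tendsto := ProbabilityMeasure.tendsto_of_tendsto_charFun fun t ↦ by
    simpa [charFun_map_inner (hX _), charFun_map_inner hZ] using
      ProbabilityMeasure.tendsto_iff_tendsto_charFun.1 (h t).tendsto 1

theorem tendstoInDistribution_prodMk_of_forall_linear {X Y : ∀ n, Ω n → ℝ} {U V : Ω' → ℝ}
    (h : ∀ a b : ℝ, TendstoInDistribution (fun n ω ↦ a * X n ω + b * Y n ω) atTop
      (fun ω ↦ a * U ω + b * V ω) P P') :
    TendstoInDistribution (fun n ω ↦ (X n ω, Y n ω)) atTop (fun ω ↦ (U ω, V ω)) P P' := by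
  have hX n : AEMeasurable (X n) (P n) := by simpa using (h 1 0).forall_aemeasurable n
  have hY n : AEMeasurable (Y n) (P n) := by simpa using (h 0 1).forall_aemeasurable n
  have hU : AEMeasurable U P' := by simpa using (h 1 0).aemeasurable_limit
  have hV : AEMeasurable V P' := by simpa using (h 0 1).aemeasurable_limit
  have h_toLp : TendstoInDistribution (fun n ω ↦ WithLp.toLp 2 (X n ω, Y n ω)) atTop
      (fun ω ↦ WithLp.toLp 2 (U ω, V ω)) P P' :=
    tendstoInDistribution_of_forall_inner (by fun_prop) (by fun_prop) fun t ↦ by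
      simpa using h t.fst t.snd
  exact h_toLp.continuous_comp (WithLp.prod_continuous_ofLp 2 ℝ ℝ)

end CramerWold

section CLT

variable {Ω Ω' : Type*} {mΩ : MeasurableSpace Ω} {mΩ' : MeasurableSpace Ω'}
  {P : Measure Ω} [IsProbabilityMeasure P] {P' : Measure Ω'} [IsProbabilityMeasure P']
  {X Y : ℕ → Ω → ℝ} {U V : Ω' → ℝ}

theorem tendstoInDistribution_inv_sqrt_mul_sum_prodMk
    (hUV : ∀ a b : ℝ, HasLaw (fun ω ↦ a * U ω + b * V ω)
      (gaussianReal 0 Var[fun ω ↦ a * X 0 ω + b * Y 0 ω; P].toNNReal) P')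
    (hX : MemLp (X 0) 2 P) (hY : MemLp (Y 0) 2 P) (hX0 : P[X 0] = 0) (hY0 : P[Y 0] = 0)
    (hindep : iIndepFun (fun k ω ↦ (X k ω, Y k ω)) P)
    (hident : ∀ k, IdentDistrib (fun ω ↦ (X k ω, Y k ω)) (fun ω ↦ (X 0 ω, Y 0 ω)) P P) :
    TendstoInDistribution
      (fun (n : ℕ) ω ↦ ((√n)⁻¹ * ∑ k ∈ range n, X k ω, (√n)⁻¹ * ∑ k ∈ range n, Y k ω)) atTop
      (fun ω ↦ (U ω, V ω)) (fun _ ↦ P) P' := by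
  refine tendstoInDistribution_prodMk_of_forall_linear fun a b ↦ ?_
  have h_meas : Measurable fun p : ℝ × ℝ ↦ a * p.1 + b * p.2 := by fun_prop
  have h_mean : P[fun ω ↦ a * X 0 ω + b * Y 0 ω] = 0 := by
    rw [integral_add ((hX.integrable one_le_two).const_mul a)
      ((hY.integrable one_le_two).const_mul b), integral_const_mul, integral_const_mul, hX0, hY0]
    simp
  have h_clt := tendstoInDistribution_inv_sqrt_mul_sum_sub
    (X := fun k ω ↦ a * X k ω + b * Y k ω) (hUV a b) ((hX.const_mul a).add (hY.const_mul b))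
    (hindep.comp (fun _ ↦ _) fun _ ↦ h_meas) fun k ↦ (hident k).comp h_meas
  simp only [h_mean, mul_zero, sub_zero] at h_clt
  convert h_clt using 3 with n ω
  rw [sum_add_distrib, ← mul_sum, ← mul_sum]
  ring

end CLT

lemma hasLaw_mul_fst_add_mul_snd (a b : ℝ) :
    HasLaw (fun p : ℝ × ℝ ↦ a * p.1 + b * p.2) (gaussianReal 0 (a ^ 2 + b ^ 2).toNNReal)
      ((gaussianReal 0 1).prod (gaussianReal 0 1)) := by
  have h_fst : HasLaw (fun p : ℝ × ℝ ↦ p.1) (gaussianReal 0 1)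
      ((gaussianReal 0 1).prod (gaussianReal 0 1)) := measurePreserving_fst.hasLaw
  have h_snd : HasLaw (fun p : ℝ × ℝ ↦ p.2) (gaussianReal 0 1)
      ((gaussianReal 0 1).prod (gaussianReal 0 1)) := measurePreserving_snd.hasLaw
  have h_indep : IndepFun (fun p : ℝ × ℝ ↦ a * p.1) (fun p ↦ b * p.2)
      ((gaussianReal 0 1).prod (gaussianReal 0 1)) :=
    indepFun_prod (by fun_prop) (by fun_prop)
  have h_law := gaussianReal_add_gaussianReal_of_indepFun h_indep
    (gaussianReal_const_mul h_fst a).map_eq (gaussianReal_const_mul h_snd b).map_eq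
  have h_var : (a ^ 2 + b ^ 2).toNNReal =
      .mk (a ^ 2) (sq_nonneg a) + .mk (b ^ 2) (sq_nonneg b) :=
    NNReal.eq (coe_toNNReal _ (by positivity))
  refine ⟨by fun_prop, h_law.trans ?_⟩
  rw [h_var, mul_zero, mul_zero, add_zero, mul_one, mul_one]

theorem setLIntegral_sq_add_sq_of_cone {A : Set (ℝ × ℝ)} (hA : MeasurableSet A)
    (h_cone : ∀ r > (0 : ℝ), ∀ p, r • p ∈ A ↔ p ∈ A) {g : ℝ → ℝ≥0∞} (hg : Measurable g) :
    ∫⁻ p in A, g (p.1 ^ 2 + p.2 ^ 2) =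
      (∫⁻ r in Set.Ioi 0, ENNReal.ofReal r * g (r ^ 2)) *
        volume ({θ | (cos θ, sin θ) ∈ A} ∩ Set.Ioo (-π) π) := by
  have h_angles : MeasurableSet {θ : ℝ | (cos θ, sin θ) ∈ A} :=
    hA.preimage (by fun_prop)
  calc ∫⁻ p in A, g (p.1 ^ 2 + p.2 ^ 2)
      = ∫⁻ p, A.indicator (fun p ↦ g (p.1 ^ 2 + p.2 ^ 2)) p := (lintegral_indicator hA _).symm
    _ = ∫⁻ p in Set.Ioi (0 : ℝ) ×ˢ Set.Ioo (-π) π, ENNReal.ofReal p.1 * g (p.1 ^ 2) *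
          {θ | (cos θ, sin θ) ∈ A}.indicator 1 p.2 := by
        rw [← lintegral_comp_polarCoord_symm, polarCoord_target]
        refine setLIntegral_congr_fun (measurableSet_Ioi.prod measurableSet_Ioo) ?_
        rintro ⟨r, θ⟩ ⟨hr, -⟩
        have h_mem : (r * cos θ, r * sin θ) ∈ A ↔ (cos θ, sin θ) ∈ A := h_cone r hr (cos θ, sin θ)
        have h_norm : (r * cos θ) ^ 2 + (r * sin θ) ^ 2 = r ^ 2 := by
          rw [mul_pow, mul_pow, ← mul_add, cos_sq_add_sin_sq, mul_one]
        by_cases hθ : (cos θ, sin θ) ∈ A <;> simp [h_mem, h_norm, hθ]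
    _ = _ := by
        rw [Measure.volume_eq_prod, ← Measure.prod_restrict,
          lintegral_prod_mul (f := fun r ↦ ENNReal.ofReal r * g (r ^ 2)) (by fun_prop)
            (measurable_one.indicator h_angles).aemeasurable,
          lintegral_indicator_one h_angles, Measure.restrict_apply h_angles]

lemma gaussianReal_prod_gaussianReal_line {a b : ℝ} (hab : 0 < a ^ 2 + b ^ 2) :
    ((gaussianReal 0 1).prod (gaussianReal 0 1)) {p | a * p.1 + b * p.2 = 0} = 0 := by
  have : NullSingletonClass (gaussianReal 0 (a ^ 2 + b ^ 2).toNNReal) :=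
    nullSingletonClass_gaussianReal (toNNReal_pos.2 hab).ne'
  exact ((hasLaw_mul_fst_add_mul_snd a b).measure_eq (p := (· = 0))
    (measurableSet_singleton 0)).trans (measure_singleton 0)

lemma gaussianPDF_mul_gaussianPDF (x y : ℝ) :
    gaussianPDF 0 1 x * gaussianPDF 0 1 y =
      ENNReal.ofReal ((2 * π)⁻¹ * exp (-(x ^ 2 + y ^ 2) / 2)) := by
  have h_sqrt : √(2 * π) * √(2 * π) = 2 * π := mul_self_sqrt (by positivity)
  rw [gaussianPDF, gaussianPDF, ← ENNReal.ofReal_mul (gaussianPDFReal_nonneg ..),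
    gaussianPDFReal, gaussianPDFReal, mul_mul_mul_comm, ← exp_add, ← mul_inv]
  simp only [NNReal.coe_one, mul_one, sub_zero, h_sqrt]
  ring_nf

lemma gaussianReal_prod_gaussianReal_apply {A : Set (ℝ × ℝ)} (hA : MeasurableSet A) :
    ((gaussianReal 0 1).prod (gaussianReal 0 1)) A =
      ∫⁻ p in A, ENNReal.ofReal ((2 * π)⁻¹ * exp (-(p.1 ^ 2 + p.2 ^ 2) / 2)) := by
  simp_rw [gaussianReal_of_var_ne_zero 0 one_ne_zero]
  rw [prod_withDensity (measurable_gaussianPDF ..) (measurable_gaussianPDF ..),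
    withDensity_apply _ hA, ← Measure.volume_eq_prod]
  simp_rw [gaussianPDF_mul_gaussianPDF]

theorem gaussianReal_prod_gaussianReal_apply_of_cone {A : Set (ℝ × ℝ)} (hA : MeasurableSet A)
    (h_cone : ∀ r > (0 : ℝ), ∀ p, r • p ∈ A ↔ p ∈ A) :
    ((gaussianReal 0 1).prod (gaussianReal 0 1)) A =
      volume ({θ | (cos θ, sin θ) ∈ A} ∩ Set.Ioo (-π) π) / ENNReal.ofReal (2 * π) := by
  set g : ℝ → ℝ≥0∞ := fun s ↦ ENNReal.ofReal ((2 * π)⁻¹ * exp (-s / 2))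
  have hg : Measurable g := by fun_prop
  have h_radial : ∫⁻ r in Set.Ioi 0, ENNReal.ofReal r * g (r ^ 2) =
      (ENNReal.ofReal (2 * π))⁻¹ := by
    -- The radial factor is determined by the total mass, without computing the integral.
    have h_univ := setLIntegral_sq_add_sq_of_cone .univ (by simp) hg
    rw [← gaussianReal_prod_gaussianReal_apply .univ] at h_univ
    refine ENNReal.eq_inv_of_mul_eq_one_left ?_
    simpa [two_mul] using h_univ.symm
  rw [gaussianReal_prod_gaussianReal_apply hA, setLIntegral_sq_add_sq_of_cone hA h_cone hg,
    h_radial, ENNReal.div_eq_inv_mul]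

lemma cos_pos_and_cos_sub_nonpos_iff {φ : ℝ} (hφ : φ ∈ Set.Icc 0 π) (θ : ℝ) :
    (0 < cos θ ∧ cos (φ - θ) ≤ 0) ∧ θ ∈ Set.Ioo (-π) π ↔
      θ ∈ Set.Ioo (-(π / 2)) (π / 2) ∧ θ ≤ φ - π / 2 := by
  constructor
  · rintro ⟨⟨h_pos, h_nonpos⟩, hθ⟩
    have h_abs : |θ| < π / 2 := by
      contrapose! h_pos
      rw [← cos_abs]
      exact cos_nonpos_of_pi_div_two_le_of_le h_pos (by linarith [abs_lt.2 hθ, pi_pos])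
    refine ⟨abs_lt.1 h_abs, ?_⟩
    contrapose! h_nonpos
    exact cos_pos_of_mem_Ioo ⟨by linarith [hφ.1, (abs_lt.1 h_abs).2], by linarith⟩
  · rintro ⟨h_mem, h_le⟩
    exact ⟨⟨cos_pos_of_mem_Ioo h_mem, cos_nonpos_of_pi_div_two_le_of_le (by linarith)
      (by linarith [hφ.2, h_mem.1])⟩, by linarith [h_mem.1, pi_pos], by linarith [h_mem.2, pi_pos]⟩

theorem gaussianReal_prod_gaussianReal_real_wedge {φ : ℝ} (hφ : φ ∈ Set.Icc 0 π) :
    ((gaussianReal 0 1).prod (gaussianReal 0 1)).real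
      {p | 0 < p.1 ∧ cos φ * p.1 + sin φ * p.2 ≤ 0} = φ / (2 * π) := by
  set A : Set (ℝ × ℝ) := {p | 0 < p.1 ∧ cos φ * p.1 + sin φ * p.2 ≤ 0}
  have hA : MeasurableSet A := by measurability
  have h_cone (r : ℝ) (hr : 0 < r) (p : ℝ × ℝ) : r • p ∈ A ↔ p ∈ A := by
    have h_smul : cos φ * (r * p.1) + sin φ * (r * p.2) = r * (cos φ * p.1 + sin φ * p.2) := by
      ring
    simp only [A, Set.mem_ofPred_eq, Prod.smul_fst, Prod.smul_snd, smul_eq_mul, h_smul, ← not_lt,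
      mul_pos_iff_of_pos_left hr]
  have h_angles : {θ | (cos θ, sin θ) ∈ A} ∩ Set.Ioo (-π) π =
      Set.Ioo (-(π / 2)) (π / 2) ∩ Set.Iic (φ - π / 2) := by
    ext θ
    simpa only [A, Set.mem_inter_iff, Set.mem_ofPred_eq, Set.mem_Iic, ← cos_sub] using
      cos_pos_and_cos_sub_nonpos_iff hφ θ
  have h_volume : volume (Set.Ioo (-(π / 2)) (π / 2) ∩ Set.Iic (φ - π / 2)) =
      ENNReal.ofReal φ := by
    rw [measure_congr ((ae_eq_refl _).inter Iio_ae_eq_Iic.symm), Set.Ioo_inter_Iio,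
      min_eq_right (by linarith [hφ.2]), volume_Ioo]
    ring_nf
  rw [measureReal_def, gaussianReal_prod_gaussianReal_apply_of_cone hA h_cone, h_angles, h_volume,
    ENNReal.toReal_div, ENNReal.toReal_ofReal hφ.1, ENNReal.toReal_ofReal (by positivity)]

section Portmanteau

variable {ι Ω' : Type*} {Ω : ι → Type*} {mΩ : ∀ i, MeasurableSpace (Ω i)}
  {mΩ' : MeasurableSpace Ω'} {P : ∀ i, Measure (Ω i)} [∀ i, IsProbabilityMeasure (P i)]
  {P' : Measure Ω'} [IsProbabilityMeasure P'] {l : Filter ι}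

theorem tendsto_measureReal_preimage_of_tendstoInDistribution {E : Type*} [TopologicalSpace E]
    [MeasurableSpace E] [OpensMeasurableSpace E] [HasOuterApproxClosed E]
    {X : ∀ i, Ω i → E} {Z : Ω' → E} (h : TendstoInDistribution X l Z P P')
    {A : Set E} (hA : MeasurableSet A) (h_frontier : P' (Z ⁻¹' frontier A) = 0) :
    Tendsto (fun i ↦ (P i).real (X i ⁻¹' A)) l (𝓝 (P'.real (Z ⁻¹' A))) := by
  simp_rw [measureReal_def, ← Measure.map_apply_of_aemeasurable (h.forall_aemeasurable _) hA,
    ← Measure.map_apply_of_aemeasurable h.aemeasurable_limit hA]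
  rw [← Measure.map_apply_of_aemeasurable h.aemeasurable_limit
    isClosed_frontier.measurableSet] at h_frontier
  exact (ENNReal.tendsto_toReal (measure_ne_top _ _)).comp
    (ProbabilityMeasure.tendsto_measure_of_null_frontier_of_tendsto' h.tendsto h_frontier)

lemma frontier_pos_and_nonpos_subset :
    frontier {p : ℝ × ℝ | 0 < p.1 ∧ p.2 ≤ 0} ⊆ {p | p.1 = 0} ∪ {p | p.2 = 0} := by
  intro p hp
  rcases frontier_inter_subset {p : ℝ × ℝ | 0 < p.1} {p | p.2 ≤ 0} hp with ⟨h, -⟩ | ⟨-, h⟩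
  · exact .inl (frontier_lt_subset_eq continuous_const continuous_fst h).symm
  · exact .inr (frontier_le_subset_eq continuous_snd continuous_const h)

theorem tendsto_measureReal_pos_and_nonpos_of_tendstoInDistribution
    {X Y : ∀ i, Ω i → ℝ} {U V : Ω' → ℝ}
    (h : TendstoInDistribution (fun i ω ↦ (X i ω, Y i ω)) l (fun ω ↦ (U ω, V ω)) P P')
    (hU : P' {ω | U ω = 0} = 0) (hV : P' {ω | V ω = 0} = 0) :
    Tendsto (fun i ↦ (P i).real {ω | 0 < X i ω ∧ Y i ω ≤ 0}) l
      (𝓝 (P'.real {ω | 0 < U ω ∧ V ω ≤ 0})) :=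
  tendsto_measureReal_preimage_of_tendstoInDistribution h
    (A := {p | 0 < p.1 ∧ p.2 ≤ 0}) (by measurability) <|
    measure_mono_null (Set.preimage_mono frontier_pos_and_nonpos_subset) (measure_union_null hU hV)

end Portmanteau

section Covariance

variable {Ω : Type*} {mΩ : MeasurableSpace Ω} {P : Measure Ω} [IsFiniteMeasure P]

lemma variance_const_mul_add_const_mul {X Y : Ω → ℝ} (hX : MemLp X 2 P) (hY : MemLp Y 2 P)
    (a b : ℝ) : Var[fun ω ↦ a * X ω + b * Y ω; P] =
      a ^ 2 * Var[X; P] + 2 * (a * b) * cov[X, Y; P] + b ^ 2 * Var[Y; P] := by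
  rw [variance_fun_add (hX.const_mul a) (hY.const_mul b), variance_const_mul, variance_const_mul,
    covariance_const_mul_left, covariance_const_mul_right]
  ring

lemma covariance_sq_le {X Y : Ω → ℝ} (hX : MemLp X 2 P) (hY : MemLp Y 2 P) :
    cov[X, Y; P] ^ 2 ≤ Var[X; P] * Var[Y; P] := by
  have h_discrim : discrim Var[X; P] (2 * cov[X, Y; P]) Var[Y; P] ≤ 0 := discrim_le_zero fun a ↦ by
    have h_nonneg := variance_nonneg (fun ω ↦ a * X ω + 1 * Y ω) P
    rw [variance_const_mul_add_const_mul hX hY] at h_nonneg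
    linarith
  rw [discrim] at h_discrim
  linarith

lemma measureReal_not_pos_iff_pos {U V : Ω → ℝ} (hU : AEMeasurable U P) (hV : AEMeasurable V P) :
    P.real {ω | ¬(0 < U ω ↔ 0 < V ω)} =
      P.real {ω | 0 < U ω ∧ V ω ≤ 0} + P.real {ω | 0 < V ω ∧ U ω ≤ 0} := by
  have h_null : NullMeasurableSet {ω | 0 < V ω ∧ U ω ≤ 0} P :=
    (nullMeasurableSet_lt aemeasurable_const hV).inter (nullMeasurableSet_le hU aemeasurable_const)
  have h_disjoint : Disjoint {ω | 0 < U ω ∧ V ω ≤ 0} {ω | 0 < V ω ∧ U ω ≤ 0} :=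
    Set.disjoint_left.2 fun ω hω hω' ↦ hω'.2.not_gt hω.1
  rw [← measureReal_union₀ h_null h_disjoint.aedisjoint]
  congr 1
  ext ω
  simp only [Set.mem_union, Set.mem_ofPred_eq, ← not_lt]
  tauto

end Covariance

section Sheppard

variable {Ω : Type*} {mΩ : MeasurableSpace Ω} {P : Measure Ω} [IsProbabilityMeasure P]
  {X Y : ℕ → Ω → ℝ}

theorem tendsto_measureReal_sum_pos_and_sum_nonpos (hX : MemLp (X 0) 2 P) (hY : MemLp (Y 0) 2 P)
    (hX0 : P[X 0] = 0) (hY0 : P[Y 0] = 0) (hX1 : Var[X 0; P] = 1) (hY1 : Var[Y 0; P] = 1)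
    (hindep : iIndepFun (fun k ω ↦ (X k ω, Y k ω)) P)
    (hident : ∀ k, IdentDistrib (fun ω ↦ (X k ω, Y k ω)) (fun ω ↦ (X 0 ω, Y 0 ω)) P P) :
    Tendsto (fun n ↦ P.real {ω | 0 < ∑ k ∈ range n, X k ω ∧ ∑ k ∈ range n, Y k ω ≤ 0}) atTop
      (𝓝 (arccos cov[X 0, Y 0; P] / (2 * π))) := by
  set φ := arccos cov[X 0, Y 0; P]
  have h_cos : cos φ = cov[X 0, Y 0; P] :=
    have h_sq : cov[X 0, Y 0; P] ^ 2 ≤ 1 := by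
      simpa only [hX1, hY1, mul_one] using covariance_sq_le hX hY
    have h_abs := abs_le.1 ((sq_le_one_iff_abs_le_one _).1 h_sq)
    cos_arccos h_abs.1 h_abs.2
  have h_law (a b : ℝ) : HasLaw (fun p : ℝ × ℝ ↦ a * p.1 + b * (cos φ * p.1 + sin φ * p.2))
      (gaussianReal 0 Var[fun ω ↦ a * X 0 ω + b * Y 0 ω; P].toNNReal)
      ((gaussianReal 0 1).prod (gaussianReal 0 1)) := by
    convert hasLaw_mul_fst_add_mul_snd (a + b * cos φ) (b * sin φ) using 2
    · ring
    · rw [variance_const_mul_add_const_mul hX hY, hX1, hY1, ← h_cos]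
      congr 1
      linear_combination -b ^ 2 * sin_sq_add_cos_sq φ
  have h_clt := tendstoInDistribution_inv_sqrt_mul_sum_prodMk h_law hX hY hX0 hY0 hindep hident
  have h_tendsto := tendsto_measureReal_pos_and_nonpos_of_tendstoInDistribution h_clt
    (by simpa using gaussianReal_prod_gaussianReal_line (a := 1) (b := 0) (by norm_num))
    (gaussianReal_prod_gaussianReal_line (by rw [cos_sq_add_sin_sq]; exact one_pos))
  rw [gaussianReal_prod_gaussianReal_real_wedge ⟨arccos_nonneg _, arccos_le_pi _⟩] at h_tendsto
  refine h_tendsto.congr fun n ↦ ?_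
  rcases n.eq_zero_or_pos with rfl | hn
  · simp
  · have h_scale : 0 < (√n)⁻¹ := by positivity
    simp only [← not_lt, mul_pos_iff_of_pos_left h_scale]

theorem tendsto_measureReal_not_sum_pos_iff_sum_pos (hX : MemLp (X 0) 2 P) (hY : MemLp (Y 0) 2 P)
    (hX0 : P[X 0] = 0) (hY0 : P[Y 0] = 0) (hX1 : Var[X 0; P] = 1) (hY1 : Var[Y 0; P] = 1)
    (hindep : iIndepFun (fun k ω ↦ (X k ω, Y k ω)) P)
    (hident : ∀ k, IdentDistrib (fun ω ↦ (X k ω, Y k ω)) (fun ω ↦ (X 0 ω, Y 0 ω)) P P) :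
    Tendsto (fun n ↦ P.real {ω | ¬(0 < ∑ k ∈ range n, X k ω ↔ 0 < ∑ k ∈ range n, Y k ω)}) atTop
      (𝓝 (arccos cov[X 0, Y 0; P] / π)) := by
  have h_pos_nonpos :=
    tendsto_measureReal_sum_pos_and_sum_nonpos hX hY hX0 hY0 hX1 hY1 hindep hident
  have h_nonpos_pos :=
    tendsto_measureReal_sum_pos_and_sum_nonpos hY hX hY0 hX0 hY1 hX1
      (hindep.comp (fun _ ↦ Prod.swap) fun _ ↦ measurable_swap)
      fun k ↦ (hident k).comp measurable_swap
  rw [covariance_comm] at h_nonpos_pos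
  have h_add := h_pos_nonpos.add h_nonpos_pos
  rw [← add_div, ← two_mul, mul_div_mul_left _ _ two_ne_zero] at h_add
  refine h_add.congr fun n ↦ (measureReal_not_pos_iff_pos ?_ ?_).symm
  · exact Finset.aemeasurable_fun_sum _ fun k _ ↦ (hident k).aemeasurable_fst.fst
  · exact Finset.aemeasurable_fun_sum _ fun k _ ↦ (hident k).aemeasurable_fst.snd

theorem tendsto_measureReal_not_sum_comp_pos_iff_sum_comp_pos {S : Type*} {mS : MeasurableSpace S}
    {μ : Measure S} {Z : ℕ → Ω → S} (hZ : ∀ k, HasLaw (Z k) μ P) (hindep : iIndepFun Z P)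
    {f g : S → ℝ} (hf_meas : Measurable f) (hg_meas : Measurable g) (hf : MemLp f 2 μ)
    (hg : MemLp g 2 μ) (hf0 : μ[f] = 0) (hg0 : μ[g] = 0) (hf1 : Var[f; μ] = 1)
    (hg1 : Var[g; μ] = 1) :
    Tendsto
      (fun n ↦ P.real {ω | ¬(0 < ∑ k ∈ range n, f (Z k ω) ↔ 0 < ∑ k ∈ range n, g (Z k ω))}) atTop
      (𝓝 (arccos cov[f, g; μ] / π)) := by
  have h_pair : Measurable fun s ↦ (f s, g s) := hf_meas.prodMk hg_meas
  have h_cov {u v : S → ℝ} (hu : Measurable u) (hv : Measurable v) :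
      cov[fun ω ↦ u (Z 0 ω), fun ω ↦ v (Z 0 ω); P] = cov[u, v; μ] :=
    (hZ 0).covariance_fun_comp hu.aemeasurable hv.aemeasurable
  have h_memLp {u : S → ℝ} (hu : MemLp u 2 μ) : MemLp (fun ω ↦ u (Z 0 ω)) 2 P := by
    rw [← (hZ 0).map_eq] at hu
    exact hu.comp_of_map (hZ 0).aemeasurable
  have h_var {u : S → ℝ} (hu : Measurable u) : Var[fun ω ↦ u (Z 0 ω); P] = Var[u; μ] := by
    rw [← (hZ 0).map_eq, variance_map hu.aemeasurable (hZ 0).aemeasurable]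
    rfl
  rw [← h_cov hf_meas hg_meas]
  exact tendsto_measureReal_not_sum_pos_iff_sum_pos
    (X := fun k ω ↦ f (Z k ω)) (Y := fun k ω ↦ g (Z k ω)) (h_memLp hf) (h_memLp hg)
    (((hZ 0).integral_comp hf.1).trans hf0) (((hZ 0).integral_comp hg.1).trans hg0)
    ((h_var hf_meas).trans hf1) ((h_var hg_meas).trans hg1)
    (hindep.comp (fun _ s ↦ (f s, g s)) fun _ ↦ h_pair)
    fun k ↦ ((hZ k).identDistrib (hZ 0)).comp h_pair

end Sheppard

section Votes

/-- The vote `b` as one of the numbers `±1`, in the convention of `majSign`. -/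
noncomputable def voteSign (b : Bool) : ℝ :=
  if b then 1 else -1

lemma majSign_eq_majSign_iff {n : ℕ} (x y : Fin n → Bool) :
    majSign x = majSign y ↔ (0 < ∑ i, voteSign (x i) ↔ 0 < ∑ i, voteSign (y i)) := by
  simp only [majSign, voteSign]
  split_ifs <;> norm_num [*]

/-- The law of the pair (vote, flip) of one voter: the first component is a uniform vote, the second
says whether the noise flips it, which happens with probability `t`. The noisy vote is the `xor` of
the two. -/
noncomputable def voteFlipMeasure (t : unitInterval) : Measure (Bool × Bool) :=
  (bernoulliMeasure true false ⟨1 / 2, by norm_num, by norm_num⟩).prod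
    (bernoulliMeasure true false t)

instance (t : unitInterval) : IsProbabilityMeasure (voteFlipMeasure t) := by
  unfold voteFlipMeasure
  infer_instance

variable (t : unitInterval)

lemma voteFlipMeasure_real_singleton (v : Bool × Bool) :
    (voteFlipMeasure t).real {v} = 1 / 2 * if v.2 then (t : ℝ) else 1 - t := by
  rcases v with ⟨x, e⟩
  rw [voteFlipMeasure, ← Set.singleton_prod_singleton, measureReal_prod_prod,
    bernoulliMeasure_real_apply _ (measurableSet_singleton x),
    bernoulliMeasure_real_apply _ (measurableSet_singleton e)]
  cases x <;> cases e <;> norm_num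

lemma integral_voteFlipMeasure (f : Bool × Bool → ℝ) :
    ∫ v, f v ∂voteFlipMeasure t =
      (t * (f (true, true) + f (false, true)) +
        (1 - t) * (f (true, false) + f (false, false))) / 2 := by
  rw [integral_fintype .of_finite]
  simp only [voteFlipMeasure_real_singleton, Fintype.sum_prod_type, Fintype.sum_bool, smul_eq_mul,
    if_true, Bool.false_eq_true, if_false]
  ring

lemma integral_voteSign_fst : ∫ v, voteSign v.1 ∂voteFlipMeasure t = 0 := by
  rw [integral_voteFlipMeasure]
  norm_num [voteSign]

lemma integral_voteSign_xor : ∫ v, voteSign (xor v.1 v.2) ∂voteFlipMeasure t = 0 := by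
  rw [integral_voteFlipMeasure]
  norm_num [voteSign]

lemma variance_voteSign_comp {f : Bool × Bool → Bool}
    (hf : ∫ v, voteSign (f v) ∂voteFlipMeasure t = 0) :
    Var[fun v ↦ voteSign (f v); voteFlipMeasure t] = 1 := by
  have h_sq (b : Bool) : voteSign b ^ 2 = 1 := by cases b <;> norm_num [voteSign]
  simp [variance_of_integral_eq_zero AEMeasurable.of_discrete hf, h_sq]

lemma covariance_voteSign_fst_voteSign_xor :
    cov[fun v ↦ voteSign v.1, fun v ↦ voteSign (xor v.1 v.2); voteFlipMeasure t] = 1 - 2 * t := by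
  rw [covariance_eq_sub .of_discrete .of_discrete, integral_voteSign_fst, zero_mul, sub_zero,
    integral_voteFlipMeasure]
  norm_num [voteSign]
  ring

lemma majNoiseSens_eq_measureReal_pi (n : ℕ) :
    majNoiseSens n t = (Measure.pi fun _ : Fin n ↦ voteFlipMeasure t).real
      {v | majSign (fun i ↦ (v i).1) ≠ majSign fun i ↦ xor (v i).1 (v i).2} := by
  classical
  have h_singleton (v : Fin n → Bool × Bool) :
      (Measure.pi fun _ ↦ voteFlipMeasure t).real {v} =
        1 / 2 ^ n * ∏ i, if (v i).2 then (t : ℝ) else 1 - t := by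
    rw [Measure.real, Measure.pi_singleton, ENNReal.toReal_prod]
    simp_rw [← measureReal_def, voteFlipMeasure_real_singleton]
    rw [prod_mul_distrib]
    simp
  rw [majNoiseSens, ← Fintype.sum_prod_type', ← (Equiv.arrowProdEquivProdArrow _ _ _).sum_comp,
    ← coe_filter_univ, ← sum_measureReal_singleton, sum_filter]
  refine sum_congr rfl fun v _ ↦ ?_
  rw [h_singleton]
  by_cases h_eq : majSign (fun i ↦ (v i).1) = majSign fun i ↦ xor (v i).1 (v i).2 <;>
    simp [h_eq]

variable {t} {Ω : Type*} {mΩ : MeasurableSpace Ω} {P : Measure Ω}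

theorem majNoiseSens_eq_measureReal {Z : ℕ → Ω → Bool × Bool}
    (hZ : ∀ k, HasLaw (Z k) (voteFlipMeasure t) P) (hindep : iIndepFun Z P) (n : ℕ) :
    majNoiseSens n t = P.real {ω | ¬(0 < ∑ k ∈ range n, voteSign (Z k ω).1 ↔
      0 < ∑ k ∈ range n, voteSign (xor (Z k ω).1 (Z k ω).2))} := by
  have h_law : HasLaw (fun ω (i : Fin n) ↦ Z i ω) (Measure.pi fun _ ↦ voteFlipMeasure t) P :=
    (hindep.precomp Fin.val_injective).hasLaw_pi fun i ↦ hZ i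
  rw [majNoiseSens_eq_measureReal_pi, ← h_law.measureReal_eq .of_discrete]
  simp only [ne_eq, majSign_eq_majSign_iff, sum_range]

end Votes

theorem stmt_9_general (t : ℝ) (ht : t ∈ Set.Icc 0 1) :
    Tendsto (fun n ↦ majNoiseSens n t) atTop (𝓝 (arccos (1 - 2 * t) / π)) := by
  lift t to unitInterval using ht
  obtain ⟨Ω, _, P, Z, -, hZ, hindep, _⟩ := exists_iid ℕ (voteFlipMeasure t)
  have h_sheppard := tendsto_measureReal_not_sum_comp_pos_iff_sum_comp_pos hZ hindep
    (f := fun v ↦ voteSign v.1) (g := fun v ↦ voteSign (xor v.1 v.2)) .of_discrete .of_discrete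
    .of_discrete .of_discrete (integral_voteSign_fst t) (integral_voteSign_xor t)
    (variance_voteSign_comp t (integral_voteSign_fst t))
    (variance_voteSign_comp t (integral_voteSign_xor t))
  rw [covariance_voteSign_fst_voteSign_xor] at h_sheppard
  exact h_sheppard.congr fun n ↦ (majNoiseSens_eq_measureReal hZ hindep n).symm

/-- Sheppard's formula: for majority on `2m+1` voters with noise `t`,
`N_t(maj) → arccos(1-2t)/π`. -/
theorem stmt_9 (t : ℝ) (ht0 : 0 < t) (ht1 : t < 1 / 2) :
    Filter.Tendsto (fun m : ℕ => majNoiseSens (2 * m + 1) t)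
      Filter.atTop (nhds (Real.arccos (1 - 2 * t) / Real.pi)) :=
  (stmt_9_general t ⟨ht0.le, by linarith⟩).comp <|
    tendsto_atTop_mono (fun m ↦ (by lia : m ≤ 2 * m + 1)) tendsto_id
end

section
/- (KKL, part i) There exists an absolute constant C > 0 such that for every Boolean function f : {0,1}ⁿ → {0,1} with 0.1 ≤ E[f] ≤ 0.9, there exists a variable k with influence Inf_k(f) ≥ C · log n / n. -/
open Finset Real

/-- The influence of coordinate `k` on a Boolean function: the probability
that flipping `x_k` changes the value of `f`. -/
noncomputable def influence {n : ℕ} (f : (Fin n → Bool) → Bool) (k : Fin n) : ℝ :=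
  (1 / 2 ^ n : ℝ) * ∑ x : Fin n → Bool,
    (if f x = f (Function.update x k (!x k)) then 0 else 1)

/-!
The `k`-th derivative `D_k f (x) = f (x) - f (x ⊕ e_k)` has Walsh coefficients `2 f̂(S)` for `k ∈ S`
and `0` otherwise, so the influences `𝔼 (D_k f)²` of a Boolean `f` add up to `4 ∑ |S| f̂(S)²`. If
they are all below `c log n / n`, most of the variance `∑_{S ≠ ∅} f̂(S)²` therefore sits on levels
`|S| ≤ (log n) / 8`. By Bonami's hypercontractive inequality `∑_S 3^{-|S|} ĝ(S)² ≤ ‖g‖²_{4/3}`, and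
for `g = D_k f`, which takes values in `{-1, 0, 1}`, the right-hand side is the influence to the
power `3/2`. Summed over `k`, this makes the low levels carry too little weight for that.
-/

open scoped BigOperators

/-! ### Elementary inequalities -/

lemma expect_mul_le_Lp_mul_Lq {α : Type*} {p q : ℝ} (hpq : p.HolderConjugate q) (s : Finset α)
    (f g : α → ℝ) :
    𝔼 x ∈ s, f x * g x ≤ (𝔼 x ∈ s, |f x| ^ p) ^ (1 / p) * (𝔼 x ∈ s, |g x| ^ q) ^ (1 / q) := by
  simp only [expect_eq_sum_div_card]
  have hcard : (#s : ℝ) ^ (1 / p) * (#s : ℝ) ^ (1 / q) = #s := by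
    rw [← rpow_add_of_nonneg (by positivity) hpq.one_div_nonneg hpq.symm.one_div_nonneg,
      one_div, one_div, hpq.inv_add_inv_eq_one, rpow_one]
  rw [div_rpow (by positivity) (by positivity), div_rpow (by positivity) (by positivity),
    div_mul_div_comm, hcard]
  gcongr
  exact inner_le_Lp_mul_Lq s f g hpq

lemma expect_sq_mul_sq_le {α : Type*} {s : Finset α} {f g : α → ℝ} {a b : ℝ} (ha : 0 ≤ a)
    (hb : 0 ≤ b) (hf : 𝔼 x ∈ s, f x ^ 4 ≤ a ^ 2) (hg : 𝔼 x ∈ s, g x ^ 4 ≤ b ^ 2) :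
    𝔼 x ∈ s, f x ^ 2 * g x ^ 2 ≤ a * b := by
  refine le_of_abs_le (abs_le_of_sq_le_sq ?_ (by positivity))
  calc (𝔼 x ∈ s, f x ^ 2 * g x ^ 2) ^ 2
      ≤ (𝔼 x ∈ s, (f x ^ 2) ^ 2) * 𝔼 x ∈ s, (g x ^ 2) ^ 2 := expect_mul_sq_le_sq_mul_sq _ _ _
    _ = (𝔼 x ∈ s, f x ^ 4) * 𝔼 x ∈ s, g x ^ 4 := by simp only [← pow_mul, Nat.reduceMul]
    _ ≤ a ^ 2 * b ^ 2 := by gcongr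
    _ = (a * b) ^ 2 := (mul_pow a b 2).symm

lemma one_le_inv_mul_add_rpow_mul {t : ℝ} (ht : 0 < t) {m : ℕ} (hm : 1 ≤ m) :
    1 ≤ t⁻¹ * m + 3 ^ t * (m * 3⁻¹ ^ m) := by
  have hm' : (1 : ℝ) ≤ m := by exact_mod_cast hm
  rcases le_total t m with h | h
  · have : 1 ≤ t⁻¹ * m := by rwa [inv_mul_eq_div, one_le_div ht]
    have : 0 ≤ (3 : ℝ) ^ t * (m * 3⁻¹ ^ m) := by positivity
    linarith
  · have : 1 ≤ (3 : ℝ) ^ t * (m * 3⁻¹ ^ m) := by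
      calc (1 : ℝ) = 3 ^ (m : ℝ) * (1 * 3⁻¹ ^ m) := by rw [rpow_natCast, inv_pow]; field_simp
        _ ≤ 3 ^ t * (m * 3⁻¹ ^ m) := by gcongr; norm_num
    have : 0 ≤ t⁻¹ * m := by positivity
    linarith

-- `3 ^ (log N / 8) ≤ N ^ (1 / 4)`, while `log N / 6 ≤ N ^ (1 / 6)` makes the second factor at most
-- `N * (V * N ^ (-5 / 6)) ^ (3 / 2) = V ^ (3 / 2) * N ^ (-1 / 4)`.
lemma three_rpow_log_div_mul_le {N V : ℝ} (hN : 1 ≤ N) (hV : 0 ≤ V) (hV1 : V ≤ 1) :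
    3 ^ (log N / 8) * (N * (V * log N / (6 * N)) ^ (3 / 2 : ℝ)) ≤ V := by
  have hN0 : 0 < N := by linarith
  have hL : 0 ≤ log N := log_nonneg hN
  have hthree : (3 : ℝ) ^ (log N / 8) ≤ N ^ (1 / 4 : ℝ) := by
    calc (3 : ℝ) ^ (log N / 8) ≤ exp 2 ^ (log N / 8) := by
          gcongr; linarith [add_one_le_exp (2 : ℝ)]
      _ = N ^ (1 / 4 : ℝ) := by rw [← exp_mul, rpow_def_of_pos hN0]; ring_nf
  have hlog : V * log N / (6 * N) ≤ V * N ^ (-(5 / 6) : ℝ) := by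
    have hrpow : N ^ (-(5 / 6) : ℝ) = N ^ (1 / 6 : ℝ) / N := by
      rw [← rpow_sub_one hN0.ne']; norm_num
    have := log_le_rpow_div hN0.le (by norm_num : (0 : ℝ) < 1 / 6)
    calc V * log N / (6 * N) = V * (log N / 6 / N) := by field_simp
      _ ≤ V * (N ^ (1 / 6 : ℝ) / N) := by gcongr; linarith
      _ = V * N ^ (-(5 / 6) : ℝ) := by rw [hrpow]
  calc 3 ^ (log N / 8) * (N * (V * log N / (6 * N)) ^ (3 / 2 : ℝ))
      ≤ N ^ (1 / 4 : ℝ) * (N * (V * N ^ (-(5 / 6) : ℝ)) ^ (3 / 2 : ℝ)) := by gcongr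
    _ = V ^ (3 / 2 : ℝ) * (N ^ (1 / 4 : ℝ) * N ^ (1 : ℝ) * N ^ (-(5 / 4) : ℝ)) := by
        rw [mul_rpow hV (by positivity), ← rpow_mul hN0.le, rpow_one]; ring_nf
    _ = V ^ (3 / 2 : ℝ) := by rw [← rpow_add hN0, ← rpow_add hN0]; norm_num
    _ ≤ V := by
        simpa using rpow_le_rpow_of_exponent_ge' hV hV1 zero_le_one (by norm_num : (1 : ℝ) ≤ 3 / 2)

/-! ### The cube and its Walsh characters -/

/-- The sign character `b ↦ (-1) ^ b` of a bit. -/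
def bitSign (b : Bool) : ℝ := if b then -1 else 1

lemma bitSign_sq (b : Bool) : bitSign b ^ 2 = 1 := by cases b <;> simp [bitSign]

lemma bitSign_not (b : Bool) : bitSign (!b) = -bitSign b := by cases b <;> simp [bitSign]

lemma one_add_bitSign_mul_bitSign (a b : Bool) :
    1 + bitSign a * bitSign b = if a = b then 2 else 0 := by
  cases a <;> cases b <;> norm_num [bitSign]

/-- The Walsh character `x ↦ (-1) ^ ∑ i ∈ S, x i` of the discrete cube. -/
def walsh {ι : Type*} (S : Finset ι) (x : ι → Bool) : ℝ := ∏ i ∈ S, bitSign (x i)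

/-- The Walsh polynomial on the cube with coefficients `a S` for `S ⊆ U`. -/
def walshPoly {ι : Type*} (U : Finset ι) (a : Finset ι → ℝ) (x : ι → Bool) : ℝ :=
  ∑ S ∈ U.powerset, a S * walsh S x

section Cube

variable {ι : Type*} [DecidableEq ι]

/-- The involution of the cube that negates the `k`-th coordinate. -/
def flipCoord (k : ι) : Equiv.Perm (ι → Bool) :=
  Function.Involutive.toPerm (fun x ↦ Function.update x k (!x k)) fun x ↦ by simp

lemma flipCoord_apply (k : ι) (x : ι → Bool) :
    flipCoord k x = Function.update x k (!x k) := rfl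

lemma flipCoord_flipCoord (k : ι) (x : ι → Bool) : flipCoord k (flipCoord k x) = x :=
  (flipCoord k).left_inv x

lemma bitSign_flipCoord_self (k : ι) (x : ι → Bool) :
    bitSign (flipCoord k x k) = -bitSign (x k) := by
  rw [flipCoord_apply, Function.update_self, bitSign_not]

/-- The discrete derivative of `f` in the `k`-th coordinate. Its second moment is the influence of
`k` when `f` is Boolean. -/
def flipDiff (k : ι) (f : (ι → Bool) → ℝ) (x : ι → Bool) : ℝ := f x - f (flipCoord k x)

lemma abs_flipDiff_rpow {f : (ι → Bool) → ℝ} (hf : ∀ x, f x = 0 ∨ f x = 1) {r : ℝ} (hr : r ≠ 0)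
    (k : ι) (x : ι → Bool) : |flipDiff k f x| ^ r = flipDiff k f x ^ 2 := by
  rcases hf x with h | h <;> rcases hf (flipCoord k x) with h' | h' <;>
    simp [flipDiff, h, h', zero_rpow hr]

lemma walsh_insert {i : ι} {S : Finset ι} (hi : i ∉ S) (x : ι → Bool) :
    walsh (insert i S) x = bitSign (x i) * walsh S x := prod_insert hi

lemma walsh_flipCoord_of_notMem {k : ι} {S : Finset ι} (hk : k ∉ S) (x : ι → Bool) :
    walsh S (flipCoord k x) = walsh S x :=
  prod_congr rfl fun i hi ↦ by
    rw [flipCoord_apply, Function.update_of_ne (ne_of_mem_of_not_mem hi hk)]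

lemma walsh_flipCoord_of_mem {k : ι} {S : Finset ι} (hk : k ∈ S) (x : ι → Bool) :
    walsh S (flipCoord k x) = -walsh S x := by
  have hk' := notMem_erase k S
  rw [← insert_erase hk, walsh_insert hk', walsh_insert hk', walsh_flipCoord_of_notMem hk',
    bitSign_flipCoord_self, neg_mul]

lemma walshPoly_flipCoord {k : ι} {U : Finset ι} (hk : k ∉ U) (a : Finset ι → ℝ) (x : ι → Bool) :
    walshPoly U a (flipCoord k x) = walshPoly U a x :=
  sum_congr rfl fun S hS ↦ by
    rw [walsh_flipCoord_of_notMem fun h ↦ hk (mem_powerset.1 hS h)]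

lemma walshPoly_insert {i : ι} {U : Finset ι} (hi : i ∉ U) (a : Finset ι → ℝ) (x : ι → Bool) :
    walshPoly (insert i U) a x
      = walshPoly U a x + bitSign (x i) * walshPoly U (fun S ↦ a (insert i S)) x := by
  simp only [walshPoly, sum_powerset_insert hi, mul_sum]
  congr 1
  refine sum_congr rfl fun S hS ↦ ?_
  rw [walsh_insert fun h ↦ hi (mem_powerset.1 hS h), mul_left_comm]

variable [Fintype ι]

lemma expect_comp_flipCoord (k : ι) (g : (ι → Bool) → ℝ) :
    𝔼 x, g (flipCoord k x) = 𝔼 x, g x :=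
  Fintype.expect_equiv (flipCoord k) _ _ fun _ ↦ rfl

lemma expect_bitSign_mul_eq_zero {k : ι} {g : (ι → Bool) → ℝ}
    (hg : ∀ x, g (flipCoord k x) = g x) : 𝔼 x, bitSign (x k) * g x = 0 := by
  have hneg := expect_comp_flipCoord k fun x ↦ bitSign (x k) * g x
  simp only [bitSign_flipCoord_self, hg, neg_mul, expect_neg_distrib] at hneg
  linarith

lemma sum_walsh_mul_walsh (x y : ι → Bool) :
    ∑ S, walsh S x * walsh S y = if x = y then (Fintype.card (ι → Bool) : ℝ) else 0 := by
  have hprod : ∑ S, walsh S x * walsh S y = ∏ i, if x i = y i then (2 : ℝ) else 0 := by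
    simp only [← one_add_bitSign_mul_bitSign, prod_one_add, powerset_univ, walsh,
      prod_mul_distrib]
  rw [hprod]
  split_ifs with hxy
  · simp [hxy]
  · obtain ⟨i, hi⟩ := Function.ne_iff.1 hxy
    exact prod_eq_zero (mem_univ i) (if_neg hi)

/-! ### Bonami's inequality -/

lemma expect_add_bitSign_mul_pow_four {k : ι} {f g : (ι → Bool) → ℝ}
    (hf : ∀ x, f (flipCoord k x) = f x) (hg : ∀ x, g (flipCoord k x) = g x) :
    𝔼 x, (f x + bitSign (x k) * g x) ^ 4
      = 𝔼 x, f x ^ 4 + 6 * 𝔼 x, f x ^ 2 * g x ^ 2 + 𝔼 x, g x ^ 4 := by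
  have hexpand (x : ι → Bool) : (f x + bitSign (x k) * g x) ^ 4
      = f x ^ 4 + 6 * (f x ^ 2 * g x ^ 2) + g x ^ 4
        + bitSign (x k) * (4 * f x ^ 3 * g x + 4 * f x * g x ^ 3) := by
    linear_combination (6 * f x ^ 2 * g x ^ 2 + 4 * bitSign (x k) * f x * g x ^ 3
      + (bitSign (x k) ^ 2 + 1) * g x ^ 4) * bitSign_sq (x k)
  have hodd : 𝔼 x, bitSign (x k) * (4 * f x ^ 3 * g x + 4 * f x * g x ^ 3) = 0 :=
    expect_bitSign_mul_eq_zero fun x ↦ by rw [hf, hg]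
  simp only [hexpand, expect_add_distrib, hodd, add_zero, mul_expect]

theorem expect_walshPoly_pow_four_le (U : Finset ι) (a : Finset ι → ℝ) :
    𝔼 x, walshPoly U a x ^ 4 ≤ (∑ S ∈ U.powerset, 3 ^ #S * a S ^ 2) ^ 2 := by
  induction U using Finset.induction_on generalizing a with
  | empty =>
    simp [walshPoly, walsh, ← pow_mul]
  | insert i U hi ih =>
    set b : Finset ι → ℝ := fun S ↦ a (insert i S)
    set α := ∑ S ∈ U.powerset, 3 ^ #S * a S ^ 2
    set β := ∑ S ∈ U.powerset, 3 ^ #S * b S ^ 2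
    have hα : 0 ≤ α := sum_nonneg fun S _ ↦ by positivity
    have hβ : 0 ≤ β := sum_nonneg fun S _ ↦ by positivity
    have hnorm : ∑ S ∈ (insert i U).powerset, 3 ^ #S * a S ^ 2 = α + 3 * β := by
      rw [sum_powerset_insert hi, mul_sum]
      congr 1
      refine sum_congr rfl fun S hS ↦ ?_
      rw [card_insert_of_notMem fun h ↦ hi (mem_powerset.1 hS h), pow_succ', mul_assoc]
    have hmixed := expect_sq_mul_sq_le hα hβ (ih a) (ih b)
    calc 𝔼 x, walshPoly (insert i U) a x ^ 4
        = 𝔼 x, walshPoly U a x ^ 4 + 6 * 𝔼 x, walshPoly U a x ^ 2 * walshPoly U b x ^ 2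
          + 𝔼 x, walshPoly U b x ^ 4 := by
          simp only [walshPoly_insert hi]
          exact expect_add_bitSign_mul_pow_four (walshPoly_flipCoord hi a)
            (walshPoly_flipCoord hi b)
      _ ≤ α ^ 2 + 6 * (α * β) + β ^ 2 := by gcongr <;> apply ih
      _ ≤ (α + 3 * β) ^ 2 := by linarith [sq_nonneg β]
      _ = _ := by rw [hnorm]

/-! ### Walsh coefficients -/

/-- The Walsh–Fourier coefficient `f̂(S)`. -/
noncomputable def walshCoeff (f : (ι → Bool) → ℝ) (S : Finset ι) : ℝ := 𝔼 x, f x * walsh S x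

lemma walshCoeff_empty (f : (ι → Bool) → ℝ) : walshCoeff f ∅ = 𝔼 x, f x := by
  simp [walshCoeff, walsh]

lemma expect_mul_walshPoly (f : (ι → Bool) → ℝ) (U : Finset ι) (a : Finset ι → ℝ) :
    𝔼 x, f x * walshPoly U a x = ∑ S ∈ U.powerset, a S * walshCoeff f S := by
  simp only [walshPoly, walshCoeff, mul_sum, expect_sum_comm, mul_expect, mul_left_comm]

lemma walshPoly_walshCoeff (f : (ι → Bool) → ℝ) (x : ι → Bool) :
    walshPoly univ (walshCoeff f) x = f x := by
  calc walshPoly univ (walshCoeff f) x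
      = 𝔼 y, (∑ S, walsh S x * walsh S y) * f y := by
        simp only [walshPoly, walshCoeff, powerset_univ, sum_mul, expect_mul, expect_sum_comm]
        exact sum_congr rfl fun S _ ↦ expect_congr rfl fun y _ ↦ by ring
    _ = f x := by
        simp only [sum_walsh_mul_walsh]
        simp [expect_eq_sum_div_card]

theorem sum_walshCoeff_sq (f : (ι → Bool) → ℝ) : ∑ S, walshCoeff f S ^ 2 = 𝔼 x, f x ^ 2 := by
  have h := expect_mul_walshPoly f univ (walshCoeff f)
  simp only [walshPoly_walshCoeff, powerset_univ, ← pow_two] at h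
  exact h.symm

lemma expect_abs_walshPoly_inv_three_pow_rpow_four_le (f : (ι → Bool) → ℝ) :
    𝔼 x, |walshPoly univ (fun S ↦ 3⁻¹ ^ #S * walshCoeff f S) x| ^ (4 : ℝ)
      ≤ (∑ S, 3⁻¹ ^ #S * walshCoeff f S ^ 2) ^ 2 := by
  set Tf := walshPoly univ fun S ↦ 3⁻¹ ^ #S * walshCoeff f S
  have hweight (S : Finset ι) : 3 ^ #S * (3⁻¹ ^ #S * walshCoeff f S) ^ 2
      = 3⁻¹ ^ #S * walshCoeff f S ^ 2 := by
    rw [inv_pow]; field_simp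
  have hbonami := expect_walshPoly_pow_four_le univ fun S ↦ 3⁻¹ ^ #S * walshCoeff f S
  simp only [powerset_univ, hweight] at hbonami
  calc 𝔼 x, |Tf x| ^ (4 : ℝ) = 𝔼 x, Tf x ^ 4 :=
        expect_congr rfl fun x _ ↦ by exact_mod_cast (Even.pow_abs (by decide) (Tf x))
    _ ≤ (∑ S, 3⁻¹ ^ #S * walshCoeff f S ^ 2) ^ 2 := hbonami

theorem sum_inv_three_pow_mul_walshCoeff_sq_le (f : (ι → Bool) → ℝ) :
    ∑ S, 3⁻¹ ^ #S * walshCoeff f S ^ 2 ≤ (𝔼 x, |f x| ^ (4 / 3 : ℝ)) ^ (3 / 2 : ℝ) := by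
  set W := ∑ S, 3⁻¹ ^ #S * walshCoeff f S ^ 2 with hW
  set N := 𝔼 x, |f x| ^ (4 / 3 : ℝ)
  set Tf := walshPoly univ fun S ↦ 3⁻¹ ^ #S * walshCoeff f S with hTf
  have hW0 : 0 ≤ W := sum_nonneg fun S _ ↦ by positivity
  have hN0 : 0 ≤ N := expect_nonneg fun x _ ↦ by positivity
  have hpair : 𝔼 x, f x * Tf x = W := by
    simp only [hTf, hW, expect_mul_walshPoly, powerset_univ, pow_two, mul_assoc]
  have hholder : W ≤ N ^ (3 / 4 : ℝ) * (W ^ 2) ^ (1 / 4 : ℝ) := by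
    have hpq : (4 / 3 : ℝ).HolderConjugate 4 := by
      rw [holderConjugate_iff]; norm_num
    calc W = 𝔼 x, f x * Tf x := hpair.symm
      _ ≤ N ^ (1 / (4 / 3) : ℝ) * (𝔼 x, |Tf x| ^ (4 : ℝ)) ^ (1 / 4 : ℝ) :=
        expect_mul_le_Lp_mul_Lq hpq univ f Tf
      _ ≤ N ^ (3 / 4 : ℝ) * (W ^ 2) ^ (1 / 4 : ℝ) := by
        rw [one_div_div]
        gcongr
        exact expect_abs_walshPoly_inv_three_pow_rpow_four_le f
  have hsq : W * W ≤ N ^ (3 / 2 : ℝ) * W := by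
    calc W * W ≤ (N ^ (3 / 4 : ℝ) * (W ^ 2) ^ (1 / 4 : ℝ)) ^ 2 := by rw [← pow_two]; gcongr
      _ = N ^ (3 / 2 : ℝ) * W := by
        rw [mul_pow, ← rpow_natCast W, ← rpow_mul hW0, ← rpow_mul_natCast hN0,
          ← rpow_mul_natCast hW0]
        norm_num
  rcases hW0.eq_or_lt with hW0 | hW0
  · rw [← hW0]; positivity
  · exact le_of_mul_le_mul_right hsq hW0

/-! ### Discrete derivatives -/

lemma walshCoeff_flipDiff (k : ι) (f : (ι → Bool) → ℝ) (S : Finset ι) :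
    walshCoeff (flipDiff k f) S = if k ∈ S then 2 * walshCoeff f S else 0 := by
  have hflip : 𝔼 x, f (flipCoord k x) * walsh S x = 𝔼 x, f x * walsh S (flipCoord k x) := by
    rw [← expect_comp_flipCoord k]
    simp only [flipCoord_flipCoord]
  simp only [walshCoeff, flipDiff, sub_mul, expect_sub_distrib, hflip]
  split_ifs with hk
  · simp only [walsh_flipCoord_of_mem hk, mul_neg, expect_neg_distrib]
    ring
  · simp only [walsh_flipCoord_of_notMem hk, sub_self]

lemma sum_sum_mul_walshCoeff_flipDiff_sq (w : Finset ι → ℝ) (f : (ι → Bool) → ℝ) :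
    ∑ k, ∑ S, w S * walshCoeff (flipDiff k f) S ^ 2
      = 4 * ∑ S, #S * (w S * walshCoeff f S ^ 2) := by
  rw [sum_comm, mul_sum]
  refine sum_congr rfl fun S _ ↦ ?_
  simp only [walshCoeff_flipDiff, ite_pow, mul_ite, ne_eq, OfNat.ofNat_ne_zero, not_false_eq_true,
    zero_pow, mul_zero, sum_ite_mem, univ_inter, sum_const, nsmul_eq_mul]
  ring

lemma expect_sq_sub_sq_expect_eq_sum_walshCoeff_sq (f : (ι → Bool) → ℝ) :
    𝔼 x, f x ^ 2 - (𝔼 x, f x) ^ 2 = ∑ S with S.Nonempty, walshCoeff f S ^ 2 := by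
  simp only [nonempty_iff_ne_empty, filter_ne']
  rw [← sum_walshCoeff_sq, ← walshCoeff_empty, ← sum_erase_eq_sub (mem_univ _)]

theorem four_mul_variance_le (f : (ι → Bool) → ℝ) {t : ℝ} (ht : 0 < t) :
    4 * (𝔼 x, f x ^ 2 - (𝔼 x, f x) ^ 2)
      ≤ t⁻¹ * ∑ k, 𝔼 x, flipDiff k f x ^ 2
        + 3 ^ t * ∑ k, (𝔼 x, |flipDiff k f x| ^ (4 / 3 : ℝ)) ^ (3 / 2 : ℝ) := by
  have htotal : ∑ k, 𝔼 x, flipDiff k f x ^ 2 = 4 * ∑ S, #S * walshCoeff f S ^ 2 := by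
    simpa only [one_mul, sum_walshCoeff_sq] using
      sum_sum_mul_walshCoeff_flipDiff_sq (fun _ ↦ 1) f
  have hnoisy : 4 * ∑ S, #S * (3⁻¹ ^ #S * walshCoeff f S ^ 2)
      ≤ ∑ k, (𝔼 x, |flipDiff k f x| ^ (4 / 3 : ℝ)) ^ (3 / 2 : ℝ) := by
    rw [← sum_sum_mul_walshCoeff_flipDiff_sq]
    exact sum_le_sum fun k _ ↦ sum_inv_three_pow_mul_walshCoeff_sq_le _
  have hlevel : ∑ S with S.Nonempty, walshCoeff f S ^ 2
      ≤ t⁻¹ * ∑ S, #S * walshCoeff f S ^ 2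
        + 3 ^ t * ∑ S, #S * (3⁻¹ ^ #S * walshCoeff f S ^ 2) := by
    rw [mul_sum, mul_sum, ← sum_add_distrib]
    refine (sum_le_sum fun S hS ↦ ?_).trans
      (sum_le_univ_sum_of_nonneg fun S ↦ by positivity)
    have h := one_le_inv_mul_add_rpow_mul ht (card_pos.2 (mem_filter.1 hS).2)
    linarith [mul_le_mul_of_nonneg_right h (sq_nonneg (walshCoeff f S))]
  rw [expect_sq_sub_sq_expect_eq_sum_walshCoeff_sq, htotal]
  linarith [mul_le_mul_of_nonneg_left hnoisy (by positivity : 0 ≤ (3 : ℝ) ^ t)]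

/-! ### Boolean functions -/

lemma four_mul_variance_le_of_expect_flipDiff_sq_le {f : (ι → Bool) → ℝ}
    (hf : ∀ x, f x = 0 ∨ f x = 1) {δ t : ℝ} (hδ : ∀ k, 𝔼 x, flipDiff k f x ^ 2 ≤ δ) (ht : 0 < t) :
    4 * (𝔼 x, f x ^ 2 - (𝔼 x, f x) ^ 2)
      ≤ t⁻¹ * (Fintype.card ι * δ) + 3 ^ t * (Fintype.card ι * δ ^ (3 / 2 : ℝ)) := by
  have htotal : ∑ k, 𝔼 x, flipDiff k f x ^ 2 ≤ Fintype.card ι * δ := by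
    simpa using sum_le_card_nsmul univ _ δ fun k _ ↦ hδ k
  have hpower : ∑ k, (𝔼 x, flipDiff k f x ^ 2) ^ (3 / 2 : ℝ)
      ≤ Fintype.card ι * δ ^ (3 / 2 : ℝ) := by
    simpa using sum_le_card_nsmul univ _ (δ ^ (3 / 2 : ℝ)) fun k _ ↦
      rpow_le_rpow (expect_nonneg fun x _ ↦ sq_nonneg _) (hδ k) (by norm_num)
  have hvar := four_mul_variance_le f ht
  simp only [abs_flipDiff_rpow hf (by norm_num : (4 / 3 : ℝ) ≠ 0)] at hvar
  exact hvar.trans (by gcongr)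

theorem exists_variance_mul_log_div_le_expect_flipDiff_sq [Nonempty ι] {f : (ι → Bool) → ℝ}
    (hf : ∀ x, f x = 0 ∨ f x = 1) :
    ∃ k, (𝔼 x, f x ^ 2 - (𝔼 x, f x) ^ 2) * log (Fintype.card ι) / (6 * Fintype.card ι)
      ≤ 𝔼 x, flipDiff k f x ^ 2 := by
  set V := 𝔼 x, f x ^ 2 - (𝔼 x, f x) ^ 2
  set N : ℝ := (Fintype.card ι : ℝ)
  set δ := V * log N / (6 * N) with hδ
  by_contra! hsmall
  have hN : 1 ≤ N := Nat.one_le_cast.2 Fintype.card_pos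
  have hδ0 : 0 < δ :=
    (expect_nonneg fun x _ ↦ sq_nonneg _).trans_lt (hsmall (Classical.arbitrary ι))
  have hVL : 0 < V * log N := by rwa [hδ, div_pos_iff_of_pos_right (by positivity)] at hδ0
  have hV : 0 < V := pos_of_mul_pos_left hVL (log_nonneg hN)
  have hL : 0 < log N := pos_of_mul_pos_right hVL hV.le
  have hV1 : V ≤ 1 := by
    have : 𝔼 x, f x ^ 2 ≤ 1 :=
      expect_le univ_nonempty fun x _ ↦ by rcases hf x with h | h <;> simp [h]
    linarith [sq_nonneg (𝔼 x, f x)]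
  have hhigh : (log N / 8)⁻¹ * (N * δ) = 4 / 3 * V := by rw [hδ]; field_simp; norm_num
  have hlow : 3 ^ (log N / 8) * (N * δ ^ (3 / 2 : ℝ)) ≤ V := three_rpow_log_div_mul_le hN hV.le hV1
  have hvar := four_mul_variance_le_of_expect_flipDiff_sq_le hf (fun k ↦ (hsmall k).le)
    (by positivity : 0 < log N / 8)
  linarith

end Cube

lemma one_div_two_pow_mul_sum_eq_expect {n : ℕ} (g : (Fin n → Bool) → ℝ) :
    (1 / 2 ^ n : ℝ) * ∑ x, g x = 𝔼 x, g x := by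
  simp [Fintype.expect_eq_sum_div_card, div_eq_inv_mul]

lemma influence_eq_expect_flipDiff_sq {n : ℕ} (f : (Fin n → Bool) → Bool) (k : Fin n) :
    influence f k = 𝔼 x, flipDiff k (fun y ↦ if f y then 1 else 0) x ^ 2 := by
  rw [influence, one_div_two_pow_mul_sum_eq_expect]
  refine expect_congr rfl fun x _ ↦ ?_
  rw [flipDiff, flipCoord_apply]
  cases f x <;> cases f (Function.update x k (!x k)) <;> norm_num

theorem stmt_15_general {n : ℕ} (hn : 1 ≤ n) (f : (Fin n → Bool) → Bool) {p : ℝ}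
    (hp : p = (1 / 2 ^ n : ℝ) * ∑ x : Fin n → Bool, (if f x then 1 else 0)) :
    ∃ k : Fin n, p * (1 - p) * Real.log n / (6 * n) ≤ influence f k := by
  have : Nonempty (Fin n) := ⟨⟨0, hn⟩⟩
  obtain ⟨k, hk⟩ := exists_variance_mul_log_div_le_expect_flipDiff_sq
    (f := fun x ↦ if f x then 1 else 0) fun x ↦ by cases f x <;> simp
  refine ⟨k, ?_⟩
  rw [influence_eq_expect_flipDiff_sq]
  rw [one_div_two_pow_mul_sum_eq_expect] at hp
  simpa [← hp, mul_one_sub, pow_two] using hk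

/-- Kahn–Kalai–Linial: there is an absolute constant `C > 0` such that every
Boolean function with `0.1 ≤ E[f] ≤ 0.9` has a variable with influence at
least `C log n / n`. -/
theorem stmt_15 :
    ∃ C : ℝ, 0 < C ∧
      ∀ n : ℕ, 1 ≤ n → ∀ f : (Fin n → Bool) → Bool,
        0.1 ≤ (1 / 2 ^ n : ℝ) * ∑ x : Fin n → Bool, (if f x then 1 else 0) →
        (1 / 2 ^ n : ℝ) * ∑ x : Fin n → Bool, (if f x then 1 else 0) ≤ 0.9 →
        ∃ k : Fin n, C * Real.log n / n ≤ influence f k := by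
  refine ⟨0.015, by norm_num, fun n hn f hlo hhi ↦ ?_⟩
  obtain ⟨k, hk⟩ := stmt_15_general hn f rfl
  refine ⟨k, le_trans ?_ hk⟩
  set p := (1 / 2 ^ n : ℝ) * ∑ x : Fin n → Bool, (if f x then 1 else 0)
  have hvar : 0.09 ≤ p * (1 - p) := by
    linarith [mul_nonneg (sub_nonneg.2 hlo) (sub_nonneg.2 hhi)]
  calc 0.015 * Real.log n / n = 0.09 * Real.log n / (6 * n) := by ring
    _ ≤ p * (1 - p) * Real.log n / (6 * n) := by gcongr
end
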